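/- arXiv:1805.09956 — 4 statements merged into one kernel-verified Lean document; each statement's English description precedes it below -/
import Mathlib

section
/- Let G be the √n×√n grid with boundary Γ, let π and π' be two disjoint intervals of Γ, each contained in a single boundary edge of G, and let d > 0 be an integer. Let M' be a set of demand pairs with S(M') ⊆ π, T̃(M') ⊆ π', and d ≤ d(t,t̃) < 2d for every destination t of M'. Assume |M'| ≥ 1024·d and that all demand pairs of M' can be simultaneously routed via node-disjoint paths in G. Let z = ⌈|M'|/(160d)⌉ − 1. Then there exist a collection Σ = {σ₁,…,σ_z} of disjoint sub-intervals of π and a collection Σ' = {σ'₁,…,σ'_z} of disjoint sub-intervals of π' such that: (1) the intervals σ₁,σ₂,…,σ_z,σ'_z,…,σ'₂,σ'₁ appear on Γ in this circular order; (2) every pair of distinct intervals σ ∈ Σ∪Σ' and σ' ∈ Σ' is separated by at least 16d vertices of Γ; (3) every interval σ' ∈ Σ' contains at least 16d and at most √n/2 vertices, and lies within distance at least 16d from every boundary edge of G except the one containing π'; and (4) for each 1 ≤ i ≤ z, there exists a set of node-disjoint paths in G routing at least d demand pairs of M'_{σ_i,σ'_i}. -/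
/-!
Fix node-disjoint paths for the demands. Cut `Γ` open at the clockwise end of `π'`, so that `π'`
becomes a final segment and every source precedes every boundary projection `t̃`. Each destination
`t` is joined to `t̃` by a column of at most `2d` vertices, which meets at most `2d` of the paths.

*Planarity.* If neither of the paths of two demands meets the column of the other, prolonging both
paths by their columns gives disjoint walks between boundary vertices, so the `t̃` are ordered
oppositely to the sources. The underlying Jordan-type fact is proved by counting the signed
crossings of one walk with a horizontal ray from a vertex of the other: after an endpoint
correction the count is constant along the second walk, and at boundary vertices it can be read off
from the cyclic positions.

*Density.* A segment of `L` boundary vertices lying between two of the `t̃` carries at most `L + 4d`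
of the `t̃`, because the paths to the destinations above it enter the `L × 2d` rectangle through its
rim, or start on it.

*Selection.* Cut the demands, ordered by source, into `z` groups of `90d = 2 · 5d + 4 · (16d + 4d)`
and drop from each group the `5d` lowest and the `5d` highest `t̃`. Two sets of `5d` demands contain
at most `20d² < 25d²` couples in which a path meets the other column, hence an unrelated couple; so
the `t̃` of the `80d` demands left in each group span disjoint intervals in decreasing order.
Trimming `16d` boundary vertices at both ends costs at most `2 (16d + 4d) = 40d` demands, and one of
the two halves of what is left carries at least `20d`, so it has at least `16d` vertices. These
halves are the `σ'ᵢ`, and `σᵢ` is the span of the surviving sources.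
-/

open Finset

abbrev Vtx := ℕ × ℕ
abbrev DPair := Vtx × Vtx

/-- The grid graph on rows `r₁..r₂` and columns `c₁..c₂` (vertices outside are isolated). -/
def rectGrid (r₁ r₂ c₁ c₂ : ℕ) : SimpleGraph Vtx :=
  SimpleGraph.fromRel (fun u v =>
    r₁ ≤ u.1 ∧ u.1 ≤ r₂ ∧ c₁ ≤ u.2 ∧ u.2 ≤ c₂ ∧
    r₁ ≤ v.1 ∧ v.1 ≤ r₂ ∧ c₁ ≤ v.2 ∧ v.2 ≤ c₂ ∧
    ((u.1 = v.1 ∧ u.2 + 1 = v.2) ∨ (u.2 = v.2 ∧ u.1 + 1 = v.1)))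

/-- The ℓ×ℓ grid graph. -/
def gridG (ℓ : ℕ) : SimpleGraph Vtx := rectGrid 1 ℓ 1 ℓ

/-- The demand pairs of `M` can be simultaneously routed via node-disjoint paths in `G`. -/
def NodeDisjointRoutable {V : Type*} (G : SimpleGraph V) (M : Finset (V × V)) : Prop :=
  ∃ P : ∀ m : {m // m ∈ M}, G.Walk m.val.1 m.val.2,
    (∀ m, (P m).IsPath) ∧
    ∀ m m' : {m // m ∈ M}, m ≠ m' → ∀ x, x ∈ (P m).support → x ∉ (P m').support

def OnTopRow (ℓ : ℕ) (v : Vtx) : Prop := v.1 = 1 ∧ 1 ≤ v.2 ∧ v.2 ≤ ℓ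

def OnBoundary (ℓ : ℕ) (v : Vtx) : Prop :=
  1 ≤ v.1 ∧ v.1 ≤ ℓ ∧ 1 ≤ v.2 ∧ v.2 ≤ ℓ ∧ (v.1 = 1 ∨ v.1 = ℓ ∨ v.2 = 1 ∨ v.2 = ℓ)

def DistinctSources (M : Finset DPair) : Prop := ∀ m ∈ M, ∀ m' ∈ M, m.1 = m'.1 → m = m'
def DistinctDests (M : Finset DPair) : Prop := ∀ m ∈ M, ∀ m' ∈ M, m.2 = m'.2 → m = m'

noncomputable def lg (n : ℕ) : ℝ := Real.logb 2 n

def IsIntervalIn (W : ℕ) (I : Finset ℕ) : Prop :=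
  ∃ a b : ℕ, 1 ≤ a ∧ a ≤ b ∧ b ≤ W ∧ I = Finset.Icc a b

def IntSeparated (d : ℕ) (I J : Finset ℕ) : Prop :=
  ∀ i ∈ I, ∀ j ∈ J, (d : ℤ) < |(i : ℤ) - (j : ℤ)|

def IsCanonicalIntervals (W d : ℕ) (Is : Finset (Finset ℕ)) : Prop :=
  (∀ I ∈ Is, IsIntervalIn W I ∧ I.card = d) ∧
    ∀ I ∈ Is, ∀ J ∈ Is, I ≠ J → IntSeparated d I J

abbrev SquareSpec := Finset ℕ × Finset ℕ

def memSquare (v : Vtx) (Q : SquareSpec) : Prop := v.1 ∈ Q.1 ∧ v.2 ∈ Q.2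

instance (v : Vtx) (Q : SquareSpec) : Decidable (memSquare v Q) := by
  unfold memSquare; infer_instance

def IsCanonicalSquares (W d : ℕ) (Qs : Finset SquareSpec) : Prop :=
  ∃ I₁ I₂ : Finset (Finset ℕ),
    IsCanonicalIntervals W d I₁ ∧ IsCanonicalIntervals W d I₂ ∧ Qs = I₁ ×ˢ I₂

/-- The number of sources of `M` lying on the shadow of the square `Q` with respect to `M`,
i.e. on the shortest sub-path of the top row containing all sources of pairs of `M` whose
destination lies in `Q`. -/
def shadowCount (M : Finset DPair) (Q : SquareSpec) : ℕ :=
  (M.filter (fun m => ∃ m₁ ∈ M, memSquare m₁.2 Q ∧ ∃ m₂ ∈ M, memSquare m₂.2 Q ∧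
      m₁.1.2 ≤ m.1.2 ∧ m.1.2 ≤ m₂.1.2)).card

/-- The square `Q` (of side `d`) has the β-shadow property with respect to `M`. -/
def HasShadowProp (β : ℝ) (d : ℕ) (M : Finset DPair) (Q : SquareSpec) : Prop :=
  (shadowCount M Q : ℝ) ≤ β * d

/-- Perimeter (number of boundary vertices) of the m×m grid. -/
def perim (m : ℕ) : ℕ := 4 * (m - 1)

/-- Clockwise position of a boundary vertex of the m×m grid, starting at the top-left
corner `(1,1)` (top row left→right, right column top→bottom, bottom row right→left,
left column bottom→top). -/
def bpos (m : ℕ) (v : Vtx) : ℕ :=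
  if v.1 = 1 then v.2 - 1
  else if v.2 = m then (m - 1) + (v.1 - 1)
  else if v.1 = m then 2 * (m - 1) + (m - v.2)
  else 3 * (m - 1) + (m - v.1)

/-- The `k`-th boundary vertex of the m×m grid in clockwise order. -/
def bvert (m k : ℕ) : Vtx :=
  if k < m - 1 then (1, k + 1)
  else if k < 2 * (m - 1) then (k - (m - 1) + 1, m)
  else if k < 3 * (m - 1) then (m, m - (k - 2 * (m - 1)))
  else (m - (k - 3 * (m - 1)), 1)

/-- `S` is an interval (sub-path) of the boundary of the m×m grid. -/
def IsBInterval (m : ℕ) (S : Finset Vtx) : Prop :=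
  ∃ a len : ℕ, 0 < len ∧ len ≤ perim m ∧
    S = (Finset.range len).image (fun i => bvert m ((a + i) % perim m))

def topEdge (m : ℕ) : Finset Vtx := (Finset.Icc 1 m).image (fun j => (1, j))
def bottomEdge (m : ℕ) : Finset Vtx := (Finset.Icc 1 m).image (fun j => (m, j))
def leftEdge (m : ℕ) : Finset Vtx := (Finset.Icc 1 m).image (fun i => (i, 1))
def rightEdge (m : ℕ) : Finset Vtx := (Finset.Icc 1 m).image (fun i => (i, m))

def boundaryEdges (m : ℕ) : List (Finset Vtx) :=
  [topEdge m, bottomEdge m, leftEdge m, rightEdge m]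

/-- Circular gap (number of boundary positions) between two boundary vertices. -/
def cgap (m : ℕ) (u v : Vtx) : ℕ :=
  min ((bpos m u + perim m - bpos m v) % perim m)
      ((bpos m v + perim m - bpos m u) % perim m)

/-- All vertices of `A` come before all vertices of `B` in the clockwise order on the
boundary, linearized starting from position `r`. -/
def OrdBefore (m r : ℕ) (A B : Finset Vtx) : Prop :=
  ∀ u ∈ A, ∀ v ∈ B, (bpos m u + r) % perim m < (bpos m v + r) % perim m

/-! ### Boundary positions -/

/-- `v` is a vertex of the m×m grid. -/
def InGrid (m : ℕ) (v : Vtx) : Prop := 1 ≤ v.1 ∧ v.1 ≤ m ∧ 1 ≤ v.2 ∧ v.2 ≤ m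

theorem OnBoundary.inGrid {m : ℕ} {v : Vtx} (h : OnBoundary m v) : InGrid m v :=
  ⟨h.1, h.2.1, h.2.2.1, h.2.2.2.1⟩

theorem perim_pos {m : ℕ} (hm : 2 ≤ m) : 0 < perim m := by unfold perim; omega

theorem bpos_lt {m : ℕ} (hm : 2 ≤ m) {v : Vtx} (h : OnBoundary m v) : bpos m v < perim m := by
  obtain ⟨h1, h2, h3, h4, -⟩ := h
  unfold bpos perim
  split_ifs <;> omega

theorem bvert_bpos {m : ℕ} (hm : 2 ≤ m) {v : Vtx} (h : OnBoundary m v) :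
    bvert m (bpos m v) = v := by
  obtain ⟨i, j⟩ := v
  obtain ⟨h1, h2, h3, h4, h5⟩ := h
  dsimp only at h1 h2 h3 h4 h5
  unfold bpos bvert
  dsimp only
  split_ifs <;> simp only [Prod.mk.injEq] <;> omega

theorem onBoundary_bvert {m : ℕ} (hm : 2 ≤ m) {k : ℕ} (h : k < perim m) :
    OnBoundary m (bvert m k) := by
  unfold perim at h
  unfold bvert
  split_ifs <;> refine ⟨?_, ?_, ?_, ?_, ?_⟩ <;> dsimp only <;> omega

theorem bpos_bvert {m : ℕ} (hm : 2 ≤ m) {k : ℕ} (h : k < perim m) : bpos m (bvert m k) = k := by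
  unfold perim at h
  unfold bvert
  split_ifs <;> unfold bpos <;> dsimp only <;> split_ifs <;> omega

/-- The clockwise position of a boundary vertex when `Γ` is cut open so that the corner `(1,1)` gets
position `r` modulo the length of `Γ`. -/
def lpos (m r : ℕ) (v : Vtx) : ℕ := (bpos m v + r) % perim m

theorem lpos_lt {m : ℕ} (hm : 2 ≤ m) (r : ℕ) (v : Vtx) : lpos m r v < perim m :=
  Nat.mod_lt _ (perim_pos hm)

theorem lpos_eq_ite {m : ℕ} (hm : 2 ≤ m) (r : ℕ) {v : Vtx} (hv : OnBoundary m v) :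
    lpos m r v = if perim m ≤ bpos m v + r % perim m then bpos m v + r % perim m - perim m
      else bpos m v + r % perim m := by
  rw [lpos, Nat.add_mod_eq_ite, Nat.mod_eq_of_lt (bpos_lt hm hv)]

theorem lpos_bvert {m : ℕ} (hm : 2 ≤ m) (r k : ℕ) :
    lpos m r (bvert m (k % perim m)) = (k + r) % perim m := by
  rw [lpos, bpos_bvert hm (Nat.mod_lt _ (perim_pos hm)), Nat.mod_add_mod]

theorem lpos_inj {m : ℕ} (hm : 2 ≤ m) {r : ℕ} {u v : Vtx} (hu : OnBoundary m u)
    (hv : OnBoundary m v) (h : lpos m r u = lpos m r v) : u = v := by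
  have h_bpos : bpos m u = bpos m v :=
    Nat.ModEq.eq_of_lt_of_lt (Nat.ModEq.add_right_cancel' r h) (bpos_lt hm hu) (bpos_lt hm hv)
  rw [← bvert_bpos hm hu, h_bpos, bvert_bpos hm hv]

theorem exists_add_mod_eq {p k : ℕ} (h : k < p) (a : ℕ) : ∃ r, (a + r) % p = k := by
  obtain ⟨p, rfl⟩ : ∃ q, p = q + 1 := ⟨p - 1, by omega⟩
  refine ⟨k + a * p, ?_⟩
  rw [show a + (k + a * p) = k + a * (p + 1) by ring, Nat.add_mul_mod_self_right,
    Nat.mod_eq_of_lt h]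

theorem exists_lpos_eq {m : ℕ} (hm : 2 ≤ m) (r : ℕ) {k : ℕ} (h : k < perim m) :
    ∃ v, OnBoundary m v ∧ lpos m r v = k := by
  obtain ⟨b, hb⟩ := exists_add_mod_eq h r
  exact ⟨bvert m (b % perim m), onBoundary_bvert hm (Nat.mod_lt _ (perim_pos hm)),
    by rw [lpos_bvert hm, Nat.add_comm, hb]⟩

instance (m : ℕ) : DecidablePred (OnBoundary m) :=
  fun v => by unfold OnBoundary; infer_instance

/-- The vertex set of `Γ`. -/
def boundaryVertices (m : ℕ) : Finset Vtx := (Icc 1 m ×ˢ Icc 1 m).filter (OnBoundary m)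

theorem mem_boundaryVertices {m : ℕ} {v : Vtx} : v ∈ boundaryVertices m ↔ OnBoundary m v := by
  simp only [boundaryVertices, mem_filter, mem_product, mem_Icc, and_iff_right_iff_imp]
  exact fun h => ⟨⟨h.1, h.2.1⟩, h.2.2.1, h.2.2.2.1⟩

/-- The boundary vertices whose position in the linearization with shift `r` lies in `[lo, hi)`. -/
def arc (m r lo hi : ℕ) : Finset Vtx :=
  (boundaryVertices m).filter fun v => lo ≤ lpos m r v ∧ lpos m r v < hi

theorem mem_arc {m r lo hi : ℕ} {v : Vtx} :
    v ∈ arc m r lo hi ↔ OnBoundary m v ∧ lo ≤ lpos m r v ∧ lpos m r v < hi := by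
  rw [arc, mem_filter, mem_boundaryVertices]

theorem card_arc {m : ℕ} (hm : 2 ≤ m) {r lo hi : ℕ} (h : hi ≤ perim m) :
    (arc m r lo hi).card = hi - lo := by
  have h_inj : Set.InjOn (lpos m r) (arc m r lo hi) := fun u hu v hv huv =>
    lpos_inj hm (mem_arc.1 hu).1 (mem_arc.1 hv).1 huv
  have h_image : (arc m r lo hi).image (lpos m r) = Ico lo hi := by
    ext k
    simp only [mem_image, mem_arc, mem_Ico]
    constructor
    · rintro ⟨v, ⟨-, hv⟩, rfl⟩
      exact hv
    · rintro ⟨hlo, hhi⟩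
      obtain ⟨v, hv, rfl⟩ := exists_lpos_eq hm r (hhi.trans_le h)
      exact ⟨v, ⟨hv, hlo, hhi⟩, rfl⟩
  rw [← card_image_of_injOn h_inj, h_image, Nat.card_Ico]

theorem lpos_bvert_add {m : ℕ} (hm : 2 ≤ m) {a r i : ℕ}
    (h : (a + r) % perim m + i < perim m) :
    lpos m r (bvert m ((a + i) % perim m)) = (a + r) % perim m + i := by
  rw [lpos_bvert hm, Nat.add_right_comm, Nat.add_mod, Nat.mod_eq_of_lt (a := i) (by omega),
    Nat.mod_eq_of_lt h]

theorem image_bvert_eq_arc {m : ℕ} (hm : 2 ≤ m) {a r len : ℕ}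
    (h : (a + r) % perim m + len ≤ perim m) :
    (range len).image (fun i => bvert m ((a + i) % perim m)) =
      arc m r ((a + r) % perim m) ((a + r) % perim m + len) := by
  have h_bdry (i : ℕ) : OnBoundary m (bvert m ((a + i) % perim m)) :=
    onBoundary_bvert hm (Nat.mod_lt _ (perim_pos hm))
  ext v
  simp only [mem_image, mem_range, mem_arc]
  constructor
  · rintro ⟨i, hi, rfl⟩
    rw [lpos_bvert_add hm (by omega)]
    exact ⟨h_bdry i, by omega, by omega⟩
  · rintro ⟨hv, hlo, hhi⟩
    refine ⟨lpos m r v - (a + r) % perim m, by omega, lpos_inj hm (r := r) (h_bdry _) hv ?_⟩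
    rw [lpos_bvert_add hm (by omega)]
    omega

theorem isBInterval_arc {m : ℕ} (hm : 2 ≤ m) {r lo hi : ℕ} (h : lo < hi) (h_hi : hi ≤ perim m) :
    IsBInterval m (arc m r lo hi) := by
  obtain ⟨a, ha⟩ := exists_add_mod_eq (h.trans_le h_hi) r
  rw [Nat.add_comm] at ha
  refine ⟨a, hi - lo, by omega, by omega, ?_⟩
  rw [image_bvert_eq_arc hm (r := r) (by omega), ha, Nat.add_sub_cancel' h.le]

theorem IsBInterval.exists_eq_final_arc {m : ℕ} (hm : 2 ≤ m) {S : Finset Vtx}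
    (h : IsBInterval m S) : ∃ r k, k < perim m ∧ S = arc m r k (perim m) := by
  obtain ⟨a, len, h_pos, h_len, rfl⟩ := h
  obtain ⟨r, hr⟩ := exists_add_mod_eq (show perim m - len < perim m by omega) a
  refine ⟨r, perim m - len, by omega, ?_⟩
  rw [image_bvert_eq_arc hm (r := r) (by omega), hr, Nat.sub_add_cancel h_len]

theorem IsBInterval.onBoundary {m : ℕ} (hm : 2 ≤ m) {S : Finset Vtx} (h : IsBInterval m S)
    {v : Vtx} (hv : v ∈ S) : OnBoundary m v := by
  obtain ⟨r, k, -, rfl⟩ := h.exists_eq_final_arc hm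
  exact (mem_arc.1 hv).1

theorem IsBInterval.exists_eq_arc {m : ℕ} (hm : 2 ≤ m) {S : Finset Vtx} (h : IsBInterval m S)
    {r : ℕ} (h_last : ∀ v ∈ S, lpos m r v + 1 ≠ perim m) : ∃ lo hi, S = arc m r lo hi := by
  obtain ⟨a, len, -, -, rfl⟩ := h
  have h_lt := Nat.mod_lt (a + r) (perim_pos hm)
  refine ⟨_, _, image_bvert_eq_arc hm (r := r) ?_⟩
  by_contra h_wrap
  refine h_last _ (mem_image.2 ⟨perim m - 1 - (a + r) % perim m, mem_range.2 (by omega), rfl⟩) ?_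
  rw [lpos_bvert_add hm (by omega)]
  omega

/-- The shortest interval containing the boundary vertices in `X`, in the linearization with shift
`r`. -/
def hull (m r : ℕ) (X : Finset Vtx) : Finset Vtx :=
  (boundaryVertices m).filter fun v =>
    (∃ a ∈ X, lpos m r a ≤ lpos m r v) ∧ ∃ b ∈ X, lpos m r v ≤ lpos m r b

theorem mem_hull {m r : ℕ} {X : Finset Vtx} {v : Vtx} :
    v ∈ hull m r X ↔ OnBoundary m v ∧
      (∃ a ∈ X, lpos m r a ≤ lpos m r v) ∧ ∃ b ∈ X, lpos m r v ≤ lpos m r b := by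
  rw [hull, mem_filter, mem_boundaryVertices]

theorem mem_hull_of_mem {m r : ℕ} {X : Finset Vtx} {v : Vtx} (h : OnBoundary m v) (hv : v ∈ X) :
    v ∈ hull m r X :=
  mem_hull.2 ⟨h, ⟨v, hv, le_rfl⟩, v, hv, le_rfl⟩

theorem isBInterval_hull {m : ℕ} (hm : 2 ≤ m) (r : ℕ) {X : Finset Vtx} (hX : X.Nonempty) :
    IsBInterval m (hull m r X) := by
  obtain ⟨a, ha, ha_min⟩ := exists_min_image X (lpos m r) hX
  obtain ⟨b, hb, hb_max⟩ := exists_max_image X (lpos m r) hX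
  have h_eq : hull m r X = arc m r (lpos m r a) (lpos m r b + 1) := by
    ext v
    rw [mem_hull, mem_arc, Nat.lt_succ_iff]
    exact ⟨fun ⟨hv, ⟨a', ha', h₁⟩, b', hb', h₂⟩ =>
      ⟨hv, (ha_min a' ha').trans h₁, h₂.trans (hb_max b' hb')⟩,
      fun ⟨hv, h₁, h₂⟩ => ⟨hv, ⟨a, ha, h₁⟩, b, hb, h₂⟩⟩
  rw [h_eq]
  exact isBInterval_arc hm (Nat.lt_succ_iff.2 (ha_min b hb)) (lpos_lt hm r b)

theorem hull_subset {m : ℕ} (hm : 2 ≤ m) {r : ℕ} {S X : Finset Vtx} (hS : IsBInterval m S)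
    (h_last : ∀ v ∈ S, lpos m r v + 1 ≠ perim m) (hX : X ⊆ S) : hull m r X ⊆ S := by
  obtain ⟨lo, hi, rfl⟩ := hS.exists_eq_arc hm h_last
  intro v hv
  obtain ⟨h_bdry, ⟨a, ha, hav⟩, b, hb, hvb⟩ := mem_hull.1 hv
  exact mem_arc.2 ⟨h_bdry, (mem_arc.1 (hX ha)).2.1.trans hav, hvb.trans_lt (mem_arc.1 (hX hb)).2.2⟩

theorem OrdBefore.disjoint {m r : ℕ} {A B : Finset Vtx} (h : OrdBefore m r A B) :
    Disjoint A B :=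
  disjoint_left.2 fun v hA hB => lt_irrefl _ (h v hA v hB)

theorem OrdBefore.hull {m r : ℕ} {A B : Finset Vtx} (h : OrdBefore m r A B) :
    OrdBefore m r (hull m r A) (hull m r B) := by
  intro u hu v hv
  obtain ⟨-, -, b, hb, hub⟩ := mem_hull.1 hu
  obtain ⟨-, ⟨a, ha, hav⟩, -⟩ := mem_hull.1 hv
  exact (hub.trans_lt (h b hb a ha)).trans_le hav

theorem ordBefore_arc {m r lo hi lo' hi' : ℕ} (h : hi ≤ lo') :
    OrdBefore m r (arc m r lo hi) (arc m r lo' hi') :=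
  fun _ hu _ hv => ((mem_arc.1 hu).2.2.trans_le h).trans_le (mem_arc.1 hv).2.1

theorem cgap_comm (m : ℕ) (u v : Vtx) : cgap m u v = cgap m v u := min_comm _ _

theorem lt_cgap {m : ℕ} (hm : 2 ≤ m) {r k : ℕ} {u v : Vtx} (hu : OnBoundary m u)
    (hv : OnBoundary m v) (h_direct : lpos m r u + k < lpos m r v)
    (h_around : lpos m r v + k < lpos m r u + perim m) : k < cgap m u v := by
  have hu_lt := bpos_lt hm hu
  have hv_lt := bpos_lt hm hv
  have hr_lt := Nat.mod_lt r (perim_pos hm)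
  have h_sub_mod {a b : ℕ} (ha : a < perim m) (hb : b < perim m) :
      (a + perim m - b) % perim m = if b ≤ a then a - b else a + perim m - b := by
    split_ifs with h
    · rw [Nat.sub_add_comm h, Nat.add_mod_right, Nat.mod_eq_of_lt (by omega)]
    · rw [Nat.mod_eq_of_lt (by omega)]
  rw [lpos_eq_ite hm r hu, lpos_eq_ite hm r hv] at h_direct h_around
  rw [cgap, h_sub_mod hu_lt hv_lt, h_sub_mod hv_lt hu_lt, lt_min_iff]
  split_ifs at * <;> omega

/-! ### Planarity of the grid -/

theorem gridG_adj {m : ℕ} {u v : Vtx} : (gridG m).Adj u v ↔ InGrid m u ∧ InGrid m v ∧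
    ((u.1 = v.1 ∧ (u.2 + 1 = v.2 ∨ v.2 + 1 = u.2)) ∨
     (u.2 = v.2 ∧ (u.1 + 1 = v.1 ∨ v.1 + 1 = u.1))) := by
  obtain ⟨a, b⟩ := u
  obtain ⟨a', b'⟩ := v
  simp only [gridG, rectGrid, SimpleGraph.fromRel_adj, InGrid, ne_eq, Prod.mk.injEq]
  omega

theorem sum_darts_sub_sum_darts {V A : Type*} [AddCommGroup A] {G : SimpleGraph V} {a c : V}
    (P : G.Walk a c) {f f' : G.Dart → A} (g : V → A)
    (h : ∀ δ ∈ P.darts, f δ - f' δ = g δ.snd - g δ.fst) :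
    (P.darts.map f).sum - (P.darts.map f').sum = g c - g a := by
  induction P with
  | nil => simp
  | cons hadj P ih =>
    simp only [SimpleGraph.Walk.darts_cons, List.mem_cons, forall_eq_or_imp] at h
    rw [SimpleGraph.Walk.darts_cons, List.map_cons, List.map_cons, List.sum_cons, List.sum_cons,
      add_sub_add_comm, h.1, ih h.2, sub_add_sub_cancel']

/-- The signed crossing of the step `u → v` with the horizontal ray running from `q + (1/2, 1/2)`
towards larger columns: `1` for a step from row `q.1` to row `q.1 + 1`, `-1` for its reverse. -/
def rayCross (q u v : Vtx) : ℤ :=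
  if u.1 = q.1 ∧ v.1 = q.1 + 1 ∧ q.2 < u.2 then 1
  else if u.1 = q.1 + 1 ∧ v.1 = q.1 ∧ q.2 < u.2 then -1
  else 0

/-- The signed number of crossings of a walk with the ray from `q`. -/
def crossings {m : ℕ} {a c : Vtx} (P : (gridG m).Walk a c) (q : Vtx) : ℤ :=
  (P.darts.map fun δ => rayCross q δ.fst δ.snd).sum

/-- The correction that a boundary endpoint `c` of a walk contributes to make the total crossing
number with the ray from `q` locally constant in `q`. -/
def endCorr (m : ℕ) (c q : Vtx) : ℤ :=
  if c.2 = m then (if q.1 < c.1 then 1 else 0)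
  else if c.1 = m then (if q.1 = m ∧ q.2 < c.2 then -1 else 0)
  else 0

/-- The corrected crossing number of a walk between boundary vertices with the ray from `q`. It is
locally constant in `q` off the walk, hence tells the two sides of the walk apart. -/
def sideNumber {m : ℕ} {a c : Vtx} (P : (gridG m).Walk a c) (q : Vtx) : ℤ :=
  crossings P q - endCorr m c q + endCorr m a q

theorem rayCross_right {m : ℕ} {q u v : Vtx} (huv : (gridG m).Adj u v) (hu : u ≠ (q.1, q.2 + 1))
    (hv : v ≠ (q.1, q.2 + 1)) : rayCross q u v = rayCross (q.1, q.2 + 1) u v := by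
  have h_step := (gridG_adj.1 huv).2.2
  rw [Ne, Prod.ext_iff] at hu hv
  dsimp only [rayCross] at *
  split_ifs <;> omega

theorem rayCross_down {m : ℕ} {q u v : Vtx} (huv : (gridG m).Adj u v) (hu : u ≠ (q.1 + 1, q.2))
    (hv : v ≠ (q.1 + 1, q.2)) : rayCross q u v - rayCross (q.1 + 1, q.2) u v =
      (if v.1 = q.1 + 1 ∧ q.2 < v.2 then 1 else 0) -
        (if u.1 = q.1 + 1 ∧ q.2 < u.2 then 1 else 0) := by
  have h_step := (gridG_adj.1 huv).2.2
  rw [Ne, Prod.ext_iff] at hu hv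
  dsimp only [rayCross] at *
  split_ifs <;> omega

theorem endCorr_right {m : ℕ} {c q : Vtx} (hq : InGrid m (q.1, q.2 + 1))
    (hne : c ≠ (q.1, q.2 + 1)) : endCorr m c q = endCorr m c (q.1, q.2 + 1) := by
  rw [Ne, Prod.ext_iff] at hne
  dsimp only [OnBoundary, InGrid, endCorr] at *
  split_ifs <;> omega

theorem endCorr_down {m : ℕ} {c q : Vtx} (hc : OnBoundary m c) (hq : InGrid m q)
    (h_bottom : q.1 < m) (hne : c ≠ (q.1 + 1, q.2)) : endCorr m c q - endCorr m c (q.1 + 1, q.2) =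
      if c.1 = q.1 + 1 ∧ q.2 < c.2 then 1 else 0 := by
  rw [Ne, Prod.ext_iff] at hne
  dsimp only [OnBoundary, InGrid, endCorr] at *
  split_ifs <;> omega

section SideNumber

variable {m : ℕ} {a c : Vtx} {P : (gridG m).Walk a c}

theorem sideNumber_right {q : Vtx} (h_grid : InGrid m (q.1, q.2 + 1))
    (hq : (q.1, q.2 + 1) ∉ P.support) :
    sideNumber P q = sideNumber P (q.1, q.2 + 1) := by
  have h_cross : crossings P q = crossings P (q.1, q.2 + 1) := by
    refine congrArg List.sum (List.map_congr_left fun δ hδ => rayCross_right δ.adj ?_ ?_)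
    · exact fun h => hq (h ▸ P.dart_fst_mem_support_of_mem_darts hδ)
    · exact fun h => hq (h ▸ P.dart_snd_mem_support_of_mem_darts hδ)
  rw [sideNumber, sideNumber, h_cross,
    endCorr_right h_grid fun h => hq (h ▸ P.end_mem_support),
    endCorr_right h_grid fun h => hq (h ▸ P.start_mem_support)]

theorem sideNumber_down {q : Vtx} (ha : OnBoundary m a) (hc : OnBoundary m c)
    (h_grid : InGrid m q) (h_bottom : q.1 < m) (hq : (q.1 + 1, q.2) ∉ P.support) :
    sideNumber P q = sideNumber P (q.1 + 1, q.2) := by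
  have h_cross := sum_darts_sub_sum_darts P (f := fun δ => rayCross q δ.fst δ.snd)
    (f' := fun δ => rayCross (q.1 + 1, q.2) δ.fst δ.snd)
    (fun u => if u.1 = q.1 + 1 ∧ q.2 < u.2 then 1 else 0)
    fun δ hδ => rayCross_down δ.adj
      (fun h => hq (h ▸ P.dart_fst_mem_support_of_mem_darts hδ))
      (fun h => hq (h ▸ P.dart_snd_mem_support_of_mem_darts hδ))
  have h_corr_c := endCorr_down hc h_grid h_bottom fun h => hq (h ▸ P.end_mem_support)
  have h_corr_a := endCorr_down ha h_grid h_bottom fun h => hq (h ▸ P.start_mem_support)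
  rw [sideNumber, sideNumber, crossings, crossings]
  linarith

theorem sideNumber_eq_of_adj {q q' : Vtx} (ha : OnBoundary m a) (hc : OnBoundary m c)
    (hadj : (gridG m).Adj q q') (hq : q ∉ P.support) (hq' : q' ∉ P.support) :
    sideNumber P q = sideNumber P q' := by
  obtain ⟨h_grid, h_grid', ⟨h_row, h | h⟩ | ⟨h_col, h | h⟩⟩ := gridG_adj.1 hadj
  · obtain rfl : q' = (q.1, q.2 + 1) := Prod.ext h_row.symm h.symm
    exact sideNumber_right h_grid' hq'
  · obtain rfl : q = (q'.1, q'.2 + 1) := Prod.ext h_row h.symm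
    exact (sideNumber_right h_grid hq).symm
  · obtain rfl : q' = (q.1 + 1, q.2) := Prod.ext h.symm h_col.symm
    exact sideNumber_down ha hc h_grid h_grid'.2.1 hq'
  · obtain rfl : q = (q'.1 + 1, q'.2) := Prod.ext h.symm h_col
    exact (sideNumber_down ha hc h_grid' h_grid.2.1 hq).symm

theorem sideNumber_eq_of_walk {b d : Vtx} (ha : OnBoundary m a) (hc : OnBoundary m c)
    (Q : (gridG m).Walk b d) (h_disj : ∀ x ∈ Q.support, x ∉ P.support) :
    sideNumber P b = sideNumber P d := by
  induction Q with
  | nil => rfl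
  | cons hadj Q ih =>
    simp only [SimpleGraph.Walk.support_cons, List.mem_cons, forall_eq_or_imp] at h_disj
    exact (sideNumber_eq_of_adj ha hc hadj h_disj.1 (h_disj.2 _ Q.start_mem_support)).trans
      (ih h_disj.2)

/-- The contribution of an end `c` of a walk to its crossings with the ray from a boundary vertex
`q` off the walk. That ray cuts off the part of the top row to the right of `q`, misses the grid, or
cuts off the rows below `q`, and this potential is constant on the two parts. -/
def endCross (m : ℕ) (c q : Vtx) : ℤ :=
  if q.1 = 1 then (if c.1 = 1 ∧ q.2 < c.2 then -1 else 0)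
  else if q.2 = m then 0
  else if q.1 = m then 0
  else (if q.1 < c.1 then 1 else 0)

theorem rayCross_eq_endCross_sub {q u v : Vtx} (huv : (gridG m).Adj u v) (hq : OnBoundary m q)
    (hu : u ≠ q) (hv : v ≠ q) : rayCross q u v = endCross m v q - endCross m u q := by
  have h_step := gridG_adj.1 huv
  rw [Ne, Prod.ext_iff] at hu hv
  dsimp only [rayCross, endCross, InGrid, OnBoundary] at *
  split_ifs <;> omega

theorem crossings_of_onBoundary {q : Vtx} (hq : OnBoundary m q) (h : q ∉ P.support) :
    crossings P q = endCross m c q - endCross m a q := by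
  have h_sum := sum_darts_sub_sum_darts P (f := fun δ => rayCross q δ.fst δ.snd)
    (f' := fun _ => 0) (fun u => endCross m u q) fun δ hδ => by
      rw [sub_zero]
      exact rayCross_eq_endCross_sub δ.adj hq
        (fun h_eq => h (h_eq ▸ P.dart_fst_mem_support_of_mem_darts hδ))
        (fun h_eq => h (h_eq ▸ P.dart_snd_mem_support_of_mem_darts hδ))
  rwa [List.map_const', List.sum_replicate, smul_zero, sub_zero] at h_sum

theorem endCross_sub_endCorr {q : Vtx} (hc : OnBoundary m c) (hq : OnBoundary m q)
    (hne : c ≠ q) : endCross m c q - endCorr m c q =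
      (if c.1 = 1 ∨ c.2 = m then 0 else 1) - (if bpos m q < bpos m c then 1 else 0) := by
  rw [Ne, Prod.ext_iff] at hne
  dsimp only [OnBoundary, endCross, endCorr, bpos] at *
  split_ifs <;> omega

theorem sideNumber_of_onBoundary {q : Vtx} (ha : OnBoundary m a) (hc : OnBoundary m c)
    (hq : OnBoundary m q) (h : q ∉ P.support) : sideNumber P q =
      ((if c.1 = 1 ∨ c.2 = m then 0 else 1) - (if bpos m q < bpos m c then 1 else 0)) -
        ((if a.1 = 1 ∨ a.2 = m then 0 else 1) - (if bpos m q < bpos m a then 1 else 0)) := by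
  rw [← endCross_sub_endCorr hc hq fun h_eq => h (h_eq ▸ P.end_mem_support),
    ← endCross_sub_endCorr ha hq fun h_eq => h (h_eq ▸ P.start_mem_support),
    sideNumber, crossings_of_onBoundary hq h]
  ring

variable {b d : Vtx} {Q : (gridG m).Walk b d}

-- Both sides vanish or both are `±1` according to whether `b` and `d` lie on the arc between `a`
-- and `c`.
theorem bpos_between_eq_of_disjoint_walks (ha : OnBoundary m a) (hc : OnBoundary m c)
    (hb : OnBoundary m b) (hd : OnBoundary m d) (h_disj : ∀ x ∈ Q.support, x ∉ P.support) :
    ((if bpos m b < bpos m c then 1 else 0) - (if bpos m b < bpos m a then 1 else 0) : ℤ) =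
      (if bpos m d < bpos m c then 1 else 0) - (if bpos m d < bpos m a then 1 else 0) := by
  have h_side := sideNumber_eq_of_walk ha hc Q h_disj
  rw [sideNumber_of_onBoundary ha hc hb (h_disj b Q.start_mem_support),
    sideNumber_of_onBoundary ha hc hd (h_disj d Q.end_mem_support)] at h_side
  linarith

theorem lpos_end_lt_of_disjoint_walks (hm : 2 ≤ m) {r : ℕ} (ha : OnBoundary m a)
    (hc : OnBoundary m c) (hb : OnBoundary m b) (hd : OnBoundary m d)
    (h_disj : ∀ x ∈ Q.support, x ∉ P.support) (hab : lpos m r a < lpos m r b)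
    (hbc : lpos m r b < lpos m r c) (hbd : lpos m r b < lpos m r d) :
    lpos m r d < lpos m r c := by
  have hdc : lpos m r d ≠ lpos m r c := fun h =>
    h_disj d Q.end_mem_support (lpos_inj hm hd hc h ▸ P.end_mem_support)
  have h_between := bpos_between_eq_of_disjoint_walks ha hc hb hd h_disj
  have ha_lt := bpos_lt hm ha
  have hb_lt := bpos_lt hm hb
  have hc_lt := bpos_lt hm hc
  have hd_lt := bpos_lt hm hd
  rw [lpos_eq_ite hm r ha, lpos_eq_ite hm r hb] at hab
  rw [lpos_eq_ite hm r hb, lpos_eq_ite hm r hc] at hbc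
  rw [lpos_eq_ite hm r hb, lpos_eq_ite hm r hd] at hbd
  rw [lpos_eq_ite hm r hd, lpos_eq_ite hm r hc] at hdc ⊢
  clear h_disj
  generalize r % perim m = s at *
  split_ifs at * <;> omega

end SideNumber

/-! ### Coordinates along a boundary edge -/

theorem mem_topEdge {m : ℕ} {v : Vtx} : v ∈ topEdge m ↔ v.1 = 1 ∧ 1 ≤ v.2 ∧ v.2 ≤ m := by
  simp only [topEdge, mem_image, mem_Icc, Prod.ext_iff]
  exact ⟨fun ⟨j, h⟩ => by omega, fun h => ⟨v.2, by omega⟩⟩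

theorem mem_bottomEdge {m : ℕ} {v : Vtx} : v ∈ bottomEdge m ↔ v.1 = m ∧ 1 ≤ v.2 ∧ v.2 ≤ m := by
  simp only [bottomEdge, mem_image, mem_Icc, Prod.ext_iff]
  exact ⟨fun ⟨j, h⟩ => by omega, fun h => ⟨v.2, by omega⟩⟩

theorem mem_leftEdge {m : ℕ} {v : Vtx} : v ∈ leftEdge m ↔ v.2 = 1 ∧ 1 ≤ v.1 ∧ v.1 ≤ m := by
  simp only [leftEdge, mem_image, mem_Icc, Prod.ext_iff]
  exact ⟨fun ⟨j, h⟩ => by omega, fun h => ⟨v.1, by omega⟩⟩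

theorem mem_rightEdge {m : ℕ} {v : Vtx} : v ∈ rightEdge m ↔ v.2 = m ∧ 1 ≤ v.1 ∧ v.1 ≤ m := by
  simp only [rightEdge, mem_image, mem_Icc, Prod.ext_iff]
  exact ⟨fun ⟨j, h⟩ => by omega, fun h => ⟨v.1, by omega⟩⟩

theorem forall_mem_boundaryEdges {m : ℕ} {p : Finset Vtx → Prop} :
    (∀ e ∈ boundaryEdges m, p e) ↔
      p (topEdge m) ∧ p (bottomEdge m) ∧ p (leftEdge m) ∧ p (rightEdge m) := by
  simp only [boundaryEdges, List.forall_mem_cons, List.not_mem_nil, false_imp_iff, implies_true,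
    and_true]

/-- Coordinates of the grid relative to the boundary edge `e`: `along` runs clockwise along `e` from
`1` to `m`, and `depth` is the distance to `e`. The clockwise position of a vertex `v` of `e` is
`offset + along v` modulo the length of `Γ`. -/
structure EdgeFrame (m : ℕ) (e : Finset Vtx) where
  along : Vtx → ℕ
  depth : Vtx → ℕ
  offset : ℕ
  one_le_along : ∀ v, InGrid m v → 1 ≤ along v := by unfold InGrid; intros; omega
  along_le : ∀ v, InGrid m v → along v ≤ m := by unfold InGrid; intros; omega
  depth_lt : ∀ v, InGrid m v → depth v < m := by unfold InGrid; intros; omega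
  ext : ∀ u v, InGrid m u → InGrid m v → along u = along v → depth u = depth v → u = v := by
    unfold InGrid; intros; ext <;> omega
  exists_eq : ∀ y δ, 1 ≤ y → y ≤ m → δ < m → ∃ v, InGrid m v ∧ along v = y ∧ depth v = δ
  adj_iff : ∀ u v, InGrid m u → InGrid m v → ((gridG m).Adj u v ↔
      (depth u = depth v ∧ (along u + 1 = along v ∨ along v + 1 = along u)) ∨
      (along u = along v ∧ (depth u + 1 = depth v ∨ depth v + 1 = depth u))) := by
    simp only [gridG_adj]; unfold InGrid; intros; omega
  mem_edge : ∀ v, v ∈ e ↔ InGrid m v ∧ depth v = 0 := by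
    simp only [mem_topEdge, mem_bottomEdge, mem_leftEdge, mem_rightEdge]
    unfold InGrid; intros; omega
  onBoundary_iff : ∀ v, InGrid m v →
      (OnBoundary m v ↔ depth v = 0 ∨ depth v + 1 = m ∨ along v = 1 ∨ along v = m) := by
    unfold OnBoundary InGrid; intros; omega
  mem_other_edge : ∀ e' ∈ boundaryEdges m, e' ≠ e → ∀ u ∈ e',
      InGrid m u ∧ (depth u + 1 = m ∨ along u = 1 ∨ along u = m) := by
    rw [forall_mem_boundaryEdges]
    simp only [ne_eq, not_true_eq_false, false_imp_iff, true_and, and_true,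
      mem_topEdge, mem_bottomEdge, mem_leftEdge, mem_rightEdge]
    unfold InGrid
    refine ⟨?_, ?_, ?_⟩ <;> intros <;> omega
  bpos_modEq : ∀ v ∈ e, bpos m v ≡ offset + along v [MOD perim m]

/-- The frame of the top edge; its offset is `-1` modulo the length of `Γ`. -/
def topFrame {m : ℕ} (hm : 2 ≤ m) : EdgeFrame m (topEdge m) where
  along v := v.2
  depth v := v.1 - 1
  offset := perim m - 1
  exists_eq y δ _ _ _ := ⟨(δ + 1, y), by unfold InGrid; dsimp only; omega⟩
  bpos_modEq v hv := by
    rw [mem_topEdge] at hv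
    have h_bpos : perim m - 1 + v.2 = bpos m v + perim m := by
      have hp := perim_pos hm
      unfold bpos
      split_ifs <;> omega
    rw [h_bpos]
    exact (Nat.add_modEq_right).symm

/-- The frame of the right edge. -/
def rightFrame {m : ℕ} (hm : 2 ≤ m) : EdgeFrame m (rightEdge m) where
  along v := v.1
  depth v := m - v.2
  offset := m - 2
  exists_eq y δ _ _ _ := ⟨(y, m - δ), by unfold InGrid; dsimp only; omega⟩
  bpos_modEq v hv := by
    rw [mem_rightEdge] at hv
    have h_bpos : bpos m v = m - 2 + v.1 := by unfold bpos; split_ifs <;> omega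
    rw [h_bpos]

/-- The frame of the bottom edge. -/
def bottomFrame {m : ℕ} (hm : 2 ≤ m) : EdgeFrame m (bottomEdge m) where
  along v := m + 1 - v.2
  depth v := m - v.1
  offset := 2 * (m - 1) - 1
  exists_eq y δ _ _ _ := ⟨(m - δ, m + 1 - y), by unfold InGrid; dsimp only; omega⟩
  bpos_modEq v hv := by
    rw [mem_bottomEdge] at hv
    have h_bpos : bpos m v = 2 * (m - 1) - 1 + (m + 1 - v.2) := by unfold bpos; split_ifs <;> omega
    rw [h_bpos]

/-- The frame of the left edge, whose last vertex is the corner `(1, 1)` of position `0`. -/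
def leftFrame {m : ℕ} (hm : 2 ≤ m) : EdgeFrame m (leftEdge m) where
  along v := m + 1 - v.1
  depth v := v.2 - 1
  offset := 3 * (m - 1) - 1
  exists_eq y δ _ _ _ := ⟨(m + 1 - y, δ + 1), by unfold InGrid; dsimp only; omega⟩
  bpos_modEq v hv := by
    rw [mem_leftEdge] at hv
    have h_bpos : 3 * (m - 1) - 1 + (m + 1 - v.1) = bpos m v + if v.1 = 1 then perim m else 0 := by
      unfold bpos perim
      split_ifs <;> omega
    rw [h_bpos]
    split_ifs
    · exact (Nat.add_modEq_right).symm
    · rfl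

theorem exists_edgeFrame {m : ℕ} (hm : 2 ≤ m) : ∀ e ∈ boundaryEdges m, Nonempty (EdgeFrame m e) :=
  forall_mem_boundaryEdges.2
    ⟨⟨topFrame hm⟩, ⟨bottomFrame hm⟩, ⟨leftFrame hm⟩, ⟨rightFrame hm⟩⟩

theorem inGrid_of_mem_support {m : ℕ} {u v : Vtx} (P : (gridG m).Walk u v) (hu : InGrid m u) :
    ∀ x ∈ P.support, InGrid m x := by
  induction P with
  | nil => simpa using hu
  | cons h P ih =>
    rw [SimpleGraph.Walk.support_cons, List.forall_mem_cons]
    exact ⟨hu, ih (gridG_adj.1 h).2.1⟩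

theorem reachable_corner {m : ℕ} {v : Vtx} (hv : InGrid m v) : (gridG m).Reachable v (1, 1) := by
  obtain ⟨i, j⟩ := v
  obtain ⟨h_i, h_im, h_j, h_jm⟩ := hv
  dsimp only at h_i h_im h_j h_jm
  induction i, h_i using Nat.le_induction with
  | base =>
    induction j, h_j using Nat.le_induction with
    | base => rfl
    | succ j h_j ih =>
      have hadj : (gridG m).Adj (1, j + 1) (1, j) := by
        rw [gridG_adj]; unfold InGrid; dsimp only; omega
      exact hadj.reachable.trans (ih (by omega))
  | succ i h_i ih =>
    have hadj : (gridG m).Adj (i + 1, j) (i, j) := by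
      rw [gridG_adj]; unfold InGrid; dsimp only; omega
    exact hadj.reachable.trans (ih (by omega))

theorem reachable_of_inGrid {m : ℕ} {u v : Vtx} (hu : InGrid m u) (hv : InGrid m v) :
    (gridG m).Reachable u v :=
  (reachable_corner hu).trans (reachable_corner hv).symm

namespace EdgeFrame

variable {m : ℕ} {e : Finset Vtx} (F : EdgeFrame m e)

theorem le_length {u v : Vtx} (P : (gridG m).Walk u v) :
    ((F.along u : ℤ) - F.along v).natAbs + ((F.depth u : ℤ) - F.depth v).natAbs ≤ P.length := by
  induction P with
  | nil => simp
  | cons hadj P ih =>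
    have h_step := (F.adj_iff _ _ (gridG_adj.1 hadj).1 (gridG_adj.1 hadj).2.1).1 hadj
    rw [SimpleGraph.Walk.length_cons]
    omega

theorem le_dist {u v : Vtx} (hu : InGrid m u) (hv : InGrid m v) :
    ((F.along u : ℤ) - F.along v).natAbs + ((F.depth u : ℤ) - F.depth v).natAbs ≤
      (gridG m).dist u v := by
  obtain ⟨P, hP⟩ := (reachable_of_inGrid hu hv).exists_walk_length_eq_dist
  exact hP ▸ F.le_length P

theorem exists_column {v : Vtx} (hv : InGrid m v) :
    ∃ w ∈ e, ∃ C : (gridG m).Walk v w, F.along w = F.along v ∧ C.length = F.depth v ∧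
      ∀ x ∈ C.support, F.along x = F.along v ∧ F.depth x ≤ F.depth v := by
  induction h_depth : F.depth v generalizing v with
  | zero => exact ⟨v, (F.mem_edge v).2 ⟨hv, h_depth⟩, .nil, by simp [h_depth]⟩
  | succ n ih =>
    obtain ⟨u, hu, hu_along, hu_depth⟩ := F.exists_eq (F.along v) n (F.one_le_along v hv)
      (F.along_le v hv) (by have := F.depth_lt v hv; omega)
    obtain ⟨w, hw, C, hw_along, hC_length, hC⟩ := ih hu hu_depth
    have hadj : (gridG m).Adj v u := (F.adj_iff v u hv hu).2 (by omega)
    refine ⟨w, hw, .cons hadj C, by omega, by simp [hC_length], ?_⟩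
    rw [SimpleGraph.Walk.support_cons, List.forall_mem_cons]
    refine ⟨⟨rfl, h_depth.le⟩, fun x hx => ?_⟩
    have := hC x hx
    omega

theorem foot_of_closest {t b : Vtx} (ht : InGrid m t) (hb : b ∈ e)
    (h_min : ∀ b', OnBoundary m b' → (gridG m).dist t b ≤ (gridG m).dist t b') :
    F.along b = F.along t ∧ F.depth t = (gridG m).dist t b := by
  obtain ⟨hb_grid, hb_depth⟩ := (F.mem_edge b).1 hb
  obtain ⟨w, hw, C, -, hC_length, -⟩ := F.exists_column ht
  obtain ⟨hw_grid, hw_depth⟩ := (F.mem_edge w).1 hw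
  have h_upper := h_min w ((F.onBoundary_iff w hw_grid).2 (Or.inl hw_depth))
  have h_dist := SimpleGraph.dist_le C
  have h_lower := F.le_dist ht hb_grid
  omega

end EdgeFrame

/-! ### Ordered groups and windows -/

section Selection

variable {α β : Type*} [LinearOrder β]

theorem exists_lowest_subset [DecidableEq α] (f : α → β) {S : Finset α} {k : ℕ} (hk : k ≤ #S) :
    ∃ A ⊆ S, #A = k ∧ ∀ p ∈ A, ∀ q ∈ S \ A, f p ≤ f q := by
  induction k with
  | zero => exact ⟨∅, empty_subset _, card_empty, by simp⟩
  | succ k ih =>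
    obtain ⟨A, hAS, hA_card, hA⟩ := ih (by omega)
    have h_rest : (S \ A).Nonempty := by
      rw [← card_pos, card_sdiff_of_subset hAS]
      omega
    obtain ⟨a, ha, ha_min⟩ := exists_min_image (S \ A) f h_rest
    obtain ⟨haS, haA⟩ := mem_sdiff.1 ha
    refine ⟨insert a A, insert_subset haS hAS, by rw [card_insert_of_notMem haA, hA_card], ?_⟩
    intro p hp q hq
    have hq' : q ∈ S \ A := sdiff_subset_sdiff le_rfl (subset_insert a A) hq
    obtain rfl | hpA := mem_insert.1 hp
    · exact ha_min q hq'
    · exact hA p hpA q hq'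

theorem exists_trimmed_subset (f : α → β) {S : Finset α} {k : ℕ} (hk : 2 * k ≤ #S) :
    ∃ A ⊆ S, ∃ B ⊆ S, ∃ C ⊆ S, #A = k ∧ #B = k ∧ #C + 2 * k = #S ∧
      (∀ p ∈ A, ∀ q ∈ C, f p ≤ f q) ∧ ∀ p ∈ C, ∀ q ∈ B, f p ≤ f q := by
  classical
  obtain ⟨A, hAS, hA_card, hA⟩ := exists_lowest_subset f (S := S) (k := k) (by omega)
  have h_rest := card_sdiff_of_subset hAS
  obtain ⟨B, hBS, hB_card, hB⟩ :=
    exists_lowest_subset (fun p => OrderDual.toDual (f p)) (S := S \ A) (k := k) (by omega)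
  refine ⟨A, hAS, B, hBS.trans sdiff_subset, (S \ A) \ B, sdiff_subset.trans sdiff_subset,
    hA_card, hB_card, ?_, fun p hp q hq => hA p hp q (sdiff_subset hq),
    fun p hp q hq => hB q hq p hp⟩
  rw [card_sdiff_of_subset hBS]
  omega

theorem exists_ordered_groups {f : α → β} {S : Finset α} (hf : Set.InjOn f S) {z N : ℕ}
    (h_card : z * N ≤ #S) : ∃ G : Fin z → Finset α, (∀ i, G i ⊆ S) ∧ (∀ i, #(G i) = N) ∧
      ∀ i j, i < j → ∀ p ∈ G i, ∀ q ∈ G j, f p < f q := by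
  classical
  induction z generalizing S with
  | zero => exact ⟨fun _ => ∅, fun i => i.elim0, fun i => i.elim0, fun i => i.elim0⟩
  | succ z ih =>
    rw [Nat.succ_mul] at h_card
    obtain ⟨A, hAS, hA_card, hA⟩ := exists_lowest_subset f (S := S) (k := N) (by omega)
    have h_rest := card_sdiff_of_subset hAS
    obtain ⟨G, hGS, hG_card, hG⟩ := ih (S := S \ A)
      (hf.mono (coe_subset.2 sdiff_subset)) (by omega)
    have hAG (i : Fin z) (p : α) (hp : p ∈ A) (q : α) (hq : q ∈ G i) : f p < f q := by
      obtain ⟨hqS, hqA⟩ := mem_sdiff.1 (hGS i hq)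
      exact (hA p hp q (hGS i hq)).lt_of_ne fun h => hqA (hf (hAS hp) hqS h ▸ hp)
    refine ⟨Fin.cons A G, Fin.cases hAS fun i => (hGS i).trans sdiff_subset,
      Fin.cases hA_card hG_card, Fin.cases (Fin.cases ?_ ?_) fun i => Fin.cases ?_ ?_⟩
    · exact fun h => absurd h (lt_irrefl _)
    · exact fun j _ => hAG j
    · exact fun h => absurd h (Fin.not_lt_zero _)
    · exact fun j hij => hG i j (Fin.succ_lt_succ_iff.1 hij)

theorem exists_unrelated_pair {r : α → α → Prop} [DecidableRel r] {A B : Finset α} {w : ℕ}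
    (hA : ∀ p ∈ A, #{q ∈ B | r p q} ≤ w) (hB : ∀ q ∈ B, #{p ∈ A | r q p} ≤ w)
    (h : #A * w + #B * w < #A * #B) : ∃ p ∈ A, ∃ q ∈ B, ¬ r p q ∧ ¬ r q p := by
  classical
  by_contra! h_all
  have h_swap : ∑ p ∈ A, #{q ∈ B | r q p} = ∑ q ∈ B, #{p ∈ A | r q p} :=
    sum_card_bipartiteAbove_eq_sum_card_bipartiteBelow fun p q => r q p
  have h_cover (p : α) (hp : p ∈ A) : #B ≤ #{q ∈ B | r p q} + #{q ∈ B | r q p} := by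
    rw [← card_filter_add_card_filter_not (s := B) (fun q => r p q)]
    gcongr with q hq
    exact h_all p hp q hq
  refine h.not_ge ?_
  calc #A * #B = ∑ _p ∈ A, #B := by rw [sum_const, smul_eq_mul]
    _ ≤ ∑ p ∈ A, (#{q ∈ B | r p q} + #{q ∈ B | r q p}) := sum_le_sum h_cover
    _ = ∑ p ∈ A, #{q ∈ B | r p q} + ∑ q ∈ B, #{p ∈ A | r q p} := by rw [sum_add_distrib, h_swap]
    _ ≤ #A * w + #B * w := Nat.add_le_add (sum_le_card_nsmul _ _ _ hA) (sum_le_card_nsmul _ _ _ hB)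

theorem exists_window {C : Finset α} {y : α → ℕ} {s c L : ℕ} (hs : 0 < s)
    (h_card : 4 * (s + c) ≤ #C)
    (h_density : ∀ l h, (∃ p ∈ C, y p ≤ l) → (∃ q ∈ C, h ≤ y q + 1) →
      #{p ∈ C | l ≤ y p ∧ y p < h} ≤ h - l + c)
    (h_spread : ∀ p ∈ C, ∀ q ∈ C, y p < y q + L) :
    ∃ lo hi, s + c ≤ #{p ∈ C | lo ≤ y p ∧ y p < hi} ∧ lo + s ≤ hi ∧ 2 * (hi - lo) ≤ L ∧
      (∃ p ∈ C, y p + s ≤ lo) ∧ ∃ q ∈ C, hi + s ≤ y q + 1 := by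
  classical
  have hC : C.Nonempty := card_pos.1 (by omega)
  obtain ⟨p, hp, hp_min⟩ := exists_min_image C y hC
  obtain ⟨q, hq, hq_max⟩ := exists_max_image C y hC
  have h_len := h_spread q hq p hp
  have h_count (l h : ℕ) (hl : y p ≤ l) (hh : h ≤ y q + 1) :
      #{p ∈ C | l ≤ y p ∧ y p < h} ≤ h - l + c := h_density l h ⟨p, hp, hl⟩ ⟨q, hq, hh⟩
  have h_all := h_count (y p) (y q + 1) le_rfl le_rfl
  rw [filter_true_of_mem fun v hv => ⟨hp_min v hv, Nat.lt_succ_of_le (hq_max v hv)⟩] at h_all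
  -- the range of `y` consists of two margins of width `s` and two halves, separated at `mid`
  obtain ⟨mid, h_mid⟩ : ∃ mid, mid = (y p + y q + 1) / 2 := ⟨_, rfl⟩
  have h_cover : C ⊆ ({v ∈ C | y p ≤ y v ∧ y v < y p + s} ∪
      {v ∈ C | y q + 1 - s ≤ y v ∧ y v < y q + 1}) ∪
      ({v ∈ C | y p + s ≤ y v ∧ y v < mid} ∪ {v ∈ C | mid ≤ y v ∧ y v < y q + 1 - s}) := by
    intro v hv
    have := hp_min v hv
    have := hq_max v hv
    simp only [mem_union, mem_filter, hv, true_and]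
    omega
  have h_sum := (((card_le_card h_cover).trans (card_union_le _ _)).trans
    (Nat.add_le_add (card_union_le _ _) (card_union_le _ _)))
  have h_left := h_count (y p) (y p + s) le_rfl (by omega)
  have h_right := h_count (y q + 1 - s) (y q + 1) (by omega) le_rfl
  have h_low := h_count (y p + s) mid (by omega) (by omega)
  have h_high := h_count mid (y q + 1 - s) (by omega) (by omega)
  by_cases h_low_large : s + c ≤ #{v ∈ C | y p + s ≤ y v ∧ y v < mid}
  · exact ⟨y p + s, mid, h_low_large, by omega, by omega, ⟨p, hp, by omega⟩, q, hq, by omega⟩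
  · exact ⟨mid, y q + 1 - s, by omega, by omega, by omega, ⟨p, hp, by omega⟩, q, hq, by omega⟩

/-- Groups of at least `n` elements of `M`, increasing with respect to `x`, whose `y`-values lie in
decreasing windows `[lo i, hi i)` of length between `s` and `L / 2`; distinct windows are at least
`s` apart, and `y` takes values at least `s` outside of each window on either side. -/
structure WindowSystem (M : Finset α) (x : α → β) (y : α → ℕ) (z s n L : ℕ) where
  group : Fin z → Finset α
  lo : Fin z → ℕ
  hi : Fin z → ℕ
  group_subset : ∀ i, group i ⊆ M
  le_card : ∀ i, n ≤ #(group i)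
  lt_of_mem_group : ∀ i j, i < j → ∀ p ∈ group i, ∀ q ∈ group j, x p < x q
  mem_window : ∀ i, ∀ p ∈ group i, lo i ≤ y p ∧ y p < hi i
  lo_add_le : ∀ i, lo i + s ≤ hi i
  length_le : ∀ i, 2 * (hi i - lo i) ≤ L
  separated : ∀ i j, i < j → hi j + s ≤ lo i
  exists_below : ∀ i, ∃ p ∈ M, y p + s ≤ lo i
  exists_above : ∀ i, ∃ q ∈ M, hi i + s ≤ y q + 1

theorem exists_windowSystem {M : Finset α} {x : α → β} {y : α → ℕ} {r : α → α → Prop}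
    [DecidableRel r] {z s c w k N L : ℕ} (hs : 0 < s) (hk : 2 * w < k)
    (hN : 2 * k + 4 * (s + c) ≤ N) (hz : z * N ≤ #M) (hx : Set.InjOn x M)
    (h_rel : ∀ p ∈ M, #{q ∈ M | r p q} ≤ w)
    (h_anti : ∀ p ∈ M, ∀ q ∈ M, ¬ r p q → ¬ r q p → x p < x q → y q < y p)
    (h_density : ∀ l h, (∃ p ∈ M, y p ≤ l) → (∃ q ∈ M, h ≤ y q + 1) →
      #{p ∈ M | l ≤ y p ∧ y p < h} ≤ h - l + c)
    (h_spread : ∀ p ∈ M, ∀ q ∈ M, y p < y q + L) :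
    Nonempty (WindowSystem M x y z s (s + c) L) := by
  obtain ⟨G, hGM, hG_card, hG⟩ := exists_ordered_groups hx hz
  choose A hA B hB C hC hA_card hB_card hC_card hAC hCB using fun i =>
    exists_trimmed_subset y (S := G i) (k := k) (by rw [hG_card i]; omega)
  have h_decreasing (i j : Fin z) (hij : i < j) (p : α) (hp : p ∈ C i) (q : α) (hq : q ∈ C j) :
      y q < y p := by
    have h_bound {D : Finset α} (hD : D ⊆ M) (u : α) (hu : u ∈ M) : #{v ∈ D | r u v} ≤ w :=
      (card_le_card (filter_subset_filter _ hD)).trans (h_rel u hu)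
    have hAM := (hA i).trans (hGM i)
    have hBM := (hB j).trans (hGM j)
    obtain ⟨u, hu, v, hv, huv, hvu⟩ := exists_unrelated_pair
      (fun u hu => h_bound hBM u (hAM hu)) (fun v hv => h_bound hAM v (hBM hv))
      (by rw [hA_card, hB_card]; nlinarith)
    calc y q ≤ y v := hCB j q hq v hv
      _ < y u := h_anti u (hAM hu) v (hBM hv) huv hvu (hG i j hij u (hA i hu) v (hB j hv))
      _ ≤ y p := hAC i u hu p hp
  have hCM (i : Fin z) : C i ⊆ M := (hC i).trans (hGM i)
  choose lo hi h_card h_long h_short h_below h_above using fun i =>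
    exists_window (C := C i) (y := y) hs (by have := hC_card i; have := hG_card i; omega)
      (fun l h ⟨p, hp, hpl⟩ ⟨q, hq, hhq⟩ => (card_le_card (filter_subset_filter _ (hCM i))).trans
        (h_density l h ⟨p, hCM i hp, hpl⟩ ⟨q, hCM i hq, hhq⟩))
      (fun p hp q hq => h_spread p (hCM i hp) q (hCM i hq))
  refine ⟨⟨fun i => {p ∈ C i | lo i ≤ y p ∧ y p < hi i}, lo, hi,
    fun i => (filter_subset _ _).trans (hCM i), h_card, fun i j hij p hp q hq => ?_,
    fun i p hp => (mem_filter.1 hp).2, h_long, h_short, fun i j hij => ?_, fun i => ?_,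
    fun i => ?_⟩⟩
  · exact hG i j hij p (hC i (filter_subset _ _ hp)) q (hC j (filter_subset _ _ hq))
  · obtain ⟨p, hp, hp_lo⟩ := h_below i
    obtain ⟨q, hq, hq_hi⟩ := h_above j
    have := h_decreasing i j hij p hp q hq
    omega
  · exact (h_below i).imp fun p hp => ⟨hCM i hp.1, hp.2⟩
  · exact (h_above i).imp fun q hq => ⟨hCM i hq.1, hq.2⟩

end Selection

/-! ### Routings -/

/-- The demand pairs of `M` are routed by pairwise disjoint walks, the walk of `p` staying in
`S p`. Recording vertex sets rather than walks makes restriction to a subset of `M` immediate. -/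
structure IsRouting {V : Type*} (G : SimpleGraph V) (M : Finset (V × V)) (S : V × V → Set V) :
    Prop where
  exists_walk : ∀ p ∈ M, ∃ P : G.Walk p.1 p.2, ∀ x ∈ P.support, x ∈ S p
  pairwiseDisjoint : (M : Set (V × V)).PairwiseDisjoint S

section Routing

variable {V : Type*} {G : SimpleGraph V} {M N : Finset (V × V)} {S : V × V → Set V}

theorem NodeDisjointRoutable.exists_isRouting (h : NodeDisjointRoutable G M) :
    ∃ S, IsRouting G M S := by
  obtain ⟨P, -, h_disj⟩ := h
  refine ⟨fun p => {x | ∃ hp : p ∈ M, x ∈ (P ⟨p, hp⟩).support},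
    fun p hp => ⟨P ⟨p, hp⟩, fun x hx => ⟨hp, hx⟩⟩, fun p _ q _ hpq => ?_⟩
  rw [Function.onFun, Set.disjoint_left]
  rintro x ⟨hp, hx⟩ ⟨hq, hx'⟩
  exact h_disj ⟨p, hp⟩ ⟨q, hq⟩ (fun h => hpq (congrArg Subtype.val h)) x hx hx'

theorem NodeDisjointRoutable.mono (h : NodeDisjointRoutable G M) (hNM : N ⊆ M) :
    NodeDisjointRoutable G N := by
  obtain ⟨P, hP, h_disj⟩ := h
  exact ⟨fun p => P ⟨p.1, hNM p.2⟩, fun p => hP _, fun p q hpq =>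
    h_disj _ _ fun h => hpq (Subtype.ext (Subtype.mk.inj h))⟩

theorem IsRouting.fst_mem (h : IsRouting G M S) {p : V × V} (hp : p ∈ M) : p.1 ∈ S p := by
  obtain ⟨P, hP⟩ := h.exists_walk p hp
  exact hP _ P.start_mem_support

theorem IsRouting.snd_mem (h : IsRouting G M S) {p : V × V} (hp : p ∈ M) : p.2 ∈ S p := by
  obtain ⟨P, hP⟩ := h.exists_walk p hp
  exact hP _ P.end_mem_support

theorem IsRouting.injOn_fst (h : IsRouting G M S) : Set.InjOn Prod.fst (M : Set (V × V)) :=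
  fun _ hp _ hq hpq => h.pairwiseDisjoint.elim_set hp hq _ (h.fst_mem hp) (hpq ▸ h.fst_mem hq)

end Routing

theorem card_le_card_of_pairwiseDisjoint {α β γ : Type*} {N : Finset α} {S : α → Set β}
    {D : Set β} {f : β → γ} {T : Finset γ} (hN : (N : Set α).PairwiseDisjoint S)
    (hf : Set.InjOn f D) (h : ∀ p ∈ N, ∃ x ∈ S p, x ∈ D ∧ f x ∈ T) : #N ≤ #T := by
  refine card_le_card_of_forall_subsingleton (fun p c => ∃ x ∈ S p, x ∈ D ∧ f x = c)
    (fun p hp => ?_) ?_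
  · obtain ⟨x, hxS, hxD, hxT⟩ := h p hp
    exact ⟨f x, hxT, x, hxS, hxD, rfl⟩
  · rintro c - p ⟨hp, x, hxS, hxD, rfl⟩ q ⟨hq, x', hxS', hxD', hxx'⟩
    exact hN.elim_set hp hq x hxS (hf hxD' hxD hxx' ▸ hxS')

/-- The coordinates `(along, depth)` of the two sides and of the deepest row of the rectangle
`A ≤ along < B`, `depth < w`, that is, of the vertices through which it can be entered. -/
def rectRim (A B w : ℕ) : Finset (ℕ × ℕ) :=
  {A} ×ˢ range w ∪ {B - 1} ×ˢ range w ∪ Ico A B ×ˢ {w - 1}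

theorem mem_rectRim {A B w y δ : ℕ} : (y, δ) ∈ rectRim A B w ↔
    ((y = A ∨ y = B - 1) ∧ δ < w) ∨ (A ≤ y ∧ y < B ∧ δ = w - 1) := by
  simp only [rectRim, mem_union, mem_product, mem_singleton, mem_range, mem_Ico]
  omega

theorem card_rectRim_le (A B w : ℕ) : #(rectRim A B w) ≤ B - A + 2 * w := by
  refine (card_union_le _ _).trans ((Nat.add_le_add_right (card_union_le _ _) _).trans ?_)
  simp only [card_product, card_singleton, card_range, Nat.card_Ico]
  omega

namespace EdgeFrame

variable {m : ℕ} {e : Finset Vtx} (F : EdgeFrame m e)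

theorem injOn_coordinates : Set.InjOn (fun v => (F.along v, F.depth v)) {v | InGrid m v} :=
  fun u hu v hv h => F.ext u v hu hv (congrArg Prod.fst h) (congrArg Prod.snd h)

theorem exists_mem_rectRim {s t : Vtx} (P : (gridG m).Walk s t) {A B w : ℕ}
    (hs : ¬ (A ≤ F.along s ∧ F.along s < B ∧ F.depth s < w))
    (ht : A ≤ F.along t ∧ F.along t < B ∧ F.depth t < w) :
    ∃ x ∈ P.support, InGrid m x ∧ (F.along x, F.depth x) ∈ rectRim A B w := by
  obtain ⟨δ, hδ, h_in, h_out⟩ := P.reverse.exists_boundary_dart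
    {v | A ≤ F.along v ∧ F.along v < B ∧ F.depth v < w} ht hs
  obtain ⟨h_fst, h_snd, -⟩ := gridG_adj.1 δ.adj
  have h_step := (F.adj_iff _ _ h_fst h_snd).1 δ.adj
  refine ⟨δ.fst, ?_, h_fst, mem_rectRim.2 ?_⟩
  · simpa only [SimpleGraph.Walk.support_reverse, List.mem_reverse] using
      P.reverse.dart_fst_mem_support_of_mem_darts hδ
  · rw [Set.mem_ofPred_eq] at h_in h_out
    omega

/-- The vertices between `v` and the edge `e`, on the line through `v` perpendicular to `e`. -/
def column (v : Vtx) : Set Vtx :=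
  {x | InGrid m x ∧ F.along x = F.along v ∧ F.depth x ≤ F.depth v}

include F in
theorem card_edge_le : #e ≤ m := by
  rw [← Nat.add_sub_cancel m 1, ← Nat.card_Icc]
  refine card_le_card_of_injOn F.along (fun v hv => ?_) fun u hu v hv huv => ?_
  · have hv := ((F.mem_edge v).1 hv).1
    exact mem_coe.2 (mem_Icc.2 ⟨F.one_le_along v hv, F.along_le v hv⟩)
  · obtain ⟨hu, hu_depth⟩ := (F.mem_edge u).1 hu
    obtain ⟨hv, hv_depth⟩ := (F.mem_edge v).1 hv
    exact F.ext u v hu hv huv (hu_depth.trans hv_depth.symm)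

theorem lpos_add_along_modEq {r : ℕ} {u v : Vtx} (hu : u ∈ e) (hv : v ∈ e) :
    lpos m r u + F.along v ≡ lpos m r v + F.along u [MOD perim m] := by
  have h_lpos (w : Vtx) (hw : w ∈ e) : lpos m r w ≡ F.offset + F.along w + r [MOD perim m] :=
    (Nat.mod_modEq _ _).trans ((F.bpos_modEq w hw).add_right r)
  calc lpos m r u + F.along v ≡ F.offset + F.along u + r + F.along v [MOD perim m] :=
        (h_lpos u hu).add_right _
    _ = F.offset + F.along v + r + F.along u := by ring
    _ ≡ lpos m r v + F.along u [MOD perim m] := (h_lpos v hv).symm.add_right _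

end EdgeFrame

/-! ### Demands whose destinations lie near an interval of `Γ` -/

/-- `π'` lies on the edge `e` and is a final segment of `Γ`, cut open with shift `r`; up to the end
of the cut `Γ`, positions on `e` are `κ + along`. -/
structure FinalSegment {m : ℕ} {e : Finset Vtx} (F : EdgeFrame m e) (r κ : ℕ)
    (π' : Finset Vtx) : Prop where
  subset_edge : π' ⊆ e
  mem_of_le : ∀ u ∈ π', ∀ v, OnBoundary m v → lpos m r u ≤ lpos m r v → v ∈ π'
  lt_perim : ∀ v ∈ π', κ + F.along v < perim m
  lpos_eq : ∀ v ∈ e, κ + F.along v < perim m → lpos m r v = κ + F.along v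

section FinalSegment

variable {m : ℕ} {e π' : Finset Vtx} {F : EdgeFrame m e} {r κ : ℕ}

theorem EdgeFrame.exists_finalSegment (hm : 2 ≤ m) (F : EdgeFrame m e) (hπ' : IsBInterval m π')
    (h_edge : π' ⊆ e) : ∃ r κ, FinalSegment F r κ π' := by
  obtain ⟨r, k, hk, rfl⟩ := hπ'.exists_eq_final_arc hm
  have h_card := (card_arc hm (r := r) (lo := k) le_rfl).symm.trans_le
    ((card_le_card h_edge).trans F.card_edge_le)
  have hp : perim m = 4 * (m - 1) := rfl
  obtain ⟨b, hb, hb_lpos⟩ := exists_lpos_eq hm r (k := perim m - 1) (by omega)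
  have hb_edge : b ∈ e := h_edge (mem_arc.2 ⟨hb, by omega, by omega⟩)
  have h_along_b := F.along_le b hb.inGrid
  refine ⟨r, perim m - 1 - F.along b, h_edge, fun u hu v hv h_le => ?_, fun v hv => ?_,
    fun v hv h_lt => ?_⟩
  · exact mem_arc.2 ⟨hv, (mem_arc.1 hu).2.1.trans h_le, lpos_lt hm r v⟩
  · by_contra! h_wrap
    have h_along := F.along_le v ((F.mem_edge v).1 (h_edge hv)).1
    have h_eq : lpos m r v = perim m - 1 - F.along b + F.along v - perim m := by
      refine Nat.ModEq.eq_of_lt_of_lt (.add_right_cancel' (F.along b) ?_) (lpos_lt hm r v)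
        (by omega)
      calc lpos m r v + F.along b ≡ lpos m r b + F.along v [MOD perim m] :=
            F.lpos_add_along_modEq (h_edge hv) hb_edge
        _ = perim m - 1 - F.along b + F.along v - perim m + F.along b + perim m := by omega
        _ ≡ _ [MOD perim m] := Nat.add_modEq_right
    have := (mem_arc.1 hv).2.1
    omega
  · refine Nat.ModEq.eq_of_lt_of_lt (.add_right_cancel' (F.along b) ?_) (lpos_lt hm r v) h_lt
    convert F.lpos_add_along_modEq (r := r) hv hb_edge using 1
    omega

theorem FinalSegment.ordBefore (h : FinalSegment F r κ π') {π : Finset Vtx}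
    (hπ : ∀ v ∈ π, OnBoundary m v) (h_disj : Disjoint π π') : OrdBefore m r π π' := by
  intro u hu v hv
  by_contra! h_le
  exact disjoint_left.1 h_disj hu (h.mem_of_le v hv u (hπ u hu) h_le)

end FinalSegment

/-- The demand pairs of `M` have their sources on `π`; their destinations are less than `w` away
from `e` and have their closest boundary vertices, given by `tilde`, on the final segment `π'`.
The pairs are routed within the sets `S p`. -/
structure Facing {m : ℕ} {e : Finset Vtx} (F : EdgeFrame m e) (r κ w : ℕ) (π π' : Finset Vtx)
    (tilde : Vtx → Vtx) (M : Finset DPair) (S : DPair → Set Vtx) : Prop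
    extends FinalSegment F r κ π' where
  isRouting : IsRouting (gridG m) M S
  onBoundary : ∀ v ∈ π, OnBoundary m v
  fst_mem : ∀ p ∈ M, p.1 ∈ π
  tilde_mem : ∀ p ∈ M, tilde p.2 ∈ π'
  along_tilde : ∀ p ∈ M, F.along (tilde p.2) = F.along p.2
  depth_lt : ∀ p ∈ M, F.depth p.2 < w
  ordBefore : OrdBefore m r π π'

namespace Facing

variable {m : ℕ} {e : Finset Vtx} {F : EdgeFrame m e} {r κ w : ℕ} {π π' : Finset Vtx}
  {tilde : Vtx → Vtx} {M : Finset DPair} {S : DPair → Set Vtx} {p q : DPair}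

theorem inGrid_snd (h : Facing F r κ w π π' tilde M S) (hp : p ∈ M) : InGrid m p.2 := by
  obtain ⟨P, -⟩ := h.isRouting.exists_walk p hp
  exact inGrid_of_mem_support P (h.onBoundary _ (h.fst_mem p hp)).inGrid _ P.end_mem_support

theorem lpos_tilde (h : Facing F r κ w π π' tilde M S) (hp : p ∈ M) :
    lpos m r (tilde p.2) = κ + F.along p.2 := by
  have h_mem := h.tilde_mem p hp
  rw [h.lpos_eq _ (h.subset_edge h_mem) (h.lt_perim _ h_mem), h.along_tilde p hp]

theorem add_along_lt_perim (h : Facing F r κ w π π' tilde M S) (hp : p ∈ M) :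
    κ + F.along p.2 < perim m :=
  h.along_tilde p hp ▸ h.lt_perim _ (h.tilde_mem p hp)

theorem card_column_meets_le (h : Facing F r κ w π π' tilde M S)
    [DecidablePred fun q => (S q ∩ F.column p.2).Nonempty] (hp : p ∈ M) :
    #{q ∈ M | (S q ∩ F.column p.2).Nonempty} ≤ w := by
  rw [← card_range w]
  refine card_le_card_of_pairwiseDisjoint (D := F.column p.2) (f := F.depth)
    (h.isRouting.pairwiseDisjoint.subset (filter_subset _ _)) (fun u hu v hv huv => ?_)
    fun q hq => ?_
  · exact F.ext u v hu.1 hv.1 (hu.2.1.trans hv.2.1.symm) huv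
  · obtain ⟨-, x, hxS, hx⟩ := mem_filter.1 hq
    exact ⟨x, hxS, hx, mem_range.2 (hx.2.2.trans_lt (h.depth_lt p hp))⟩

theorem exists_extended_walk (h : Facing F r κ w π π' tilde M S) (hp : p ∈ M) :
    ∃ P : (gridG m).Walk p.1 (tilde p.2), ∀ x ∈ P.support, x ∈ S p ∨ x ∈ F.column p.2 := by
  obtain ⟨P, hP⟩ := h.isRouting.exists_walk p hp
  obtain ⟨b, hb, C, hb_along, -, hC⟩ := F.exists_column (h.inGrid_snd hp)
  obtain ⟨hb_grid, hb_depth⟩ := (F.mem_edge b).1 hb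
  obtain ⟨ht_grid, ht_depth⟩ := (F.mem_edge _).1 (h.subset_edge (h.tilde_mem p hp))
  obtain rfl : b = tilde p.2 := F.ext b _ hb_grid ht_grid
    (hb_along.trans (h.along_tilde p hp).symm) (hb_depth.trans ht_depth.symm)
  refine ⟨P.append C, fun x hx => ?_⟩
  obtain hx | hx := (SimpleGraph.Walk.mem_support_append_iff _ _).1 hx
  · exact Or.inl (hP x hx)
  · exact Or.inr ⟨inGrid_of_mem_support C (h.inGrid_snd hp) x hx, hC x hx⟩

theorem along_lt_along_of_lpos_lt (h : Facing F r κ w π π' tilde M S) (hm : 2 ≤ m)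
    (hp : p ∈ M) (hq : q ∈ M) (hpq : ¬ (S q ∩ F.column p.2).Nonempty)
    (hqp : ¬ (S p ∩ F.column q.2).Nonempty) (h_lt : lpos m r p.1 < lpos m r q.1) :
    F.along q.2 < F.along p.2 := by
  have h_ne : p ≠ q := fun h_eq => h_lt.ne (h_eq ▸ rfl)
  obtain ⟨P, hP⟩ := h.exists_extended_walk hp
  obtain ⟨Q, hQ⟩ := h.exists_extended_walk hq
  have h_disj : ∀ x ∈ Q.support, x ∉ P.support := by
    intro x hxQ hxP
    obtain hxP | hxP := hP x hxP <;> obtain hxQ | hxQ := hQ x hxQ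
    · exact h_ne (h.isRouting.pairwiseDisjoint.elim_set hp hq x hxP hxQ)
    · exact hqp ⟨x, hxP, hxQ⟩
    · exact hpq ⟨x, hxQ, hxP⟩
    -- two columns that meet are nested, so one contains the destination of the other
    · have h_along := hxP.2.1.symm.trans hxQ.2.1
      obtain h_depth | h_depth := le_total (F.depth p.2) (F.depth q.2)
      · exact hqp ⟨p.2, h.isRouting.snd_mem hp, h.inGrid_snd hp, h_along, h_depth⟩
      · exact hpq ⟨q.2, h.isRouting.snd_mem hq, h.inGrid_snd hq, h_along.symm, h_depth⟩
  have h_bdry {u : Vtx} (hu : u ∈ π') : OnBoundary m u := by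
    obtain ⟨hu_grid, hu_depth⟩ := (F.mem_edge u).1 (h.subset_edge hu)
    exact (F.onBoundary_iff u hu_grid).2 (Or.inl hu_depth)
  have h_order := h.ordBefore _ (h.fst_mem q hq)
  have := lpos_end_lt_of_disjoint_walks hm (h.onBoundary _ (h.fst_mem p hp))
    (h_bdry (h.tilde_mem p hp)) (h.onBoundary _ (h.fst_mem q hq)) (h_bdry (h.tilde_mem q hq))
    h_disj h_lt (h_order _ (h.tilde_mem p hp)) (h_order _ (h.tilde_mem q hq))
  rw [h.lpos_tilde hp, h.lpos_tilde hq] at this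
  omega

theorem exists_mem_rectRim (h : Facing F r κ w π π' tilde M S) {t : DPair} {lo hi : ℕ}
    (hp : p ∈ M) (hp_lo : F.along p.2 ≤ lo) (hq : q ∈ M) (hq_hi : hi ≤ F.along q.2 + 1)
    (ht : t ∈ M) (ht_lo : lo ≤ F.along t.2) (ht_hi : F.along t.2 < hi) :
    ∃ x ∈ S t, InGrid m x ∧ (F.along x, F.depth x) ∈ rectRim lo hi (min w m) := by
  obtain ⟨P, hP⟩ := h.isRouting.exists_walk t ht
  have h_mem := h.fst_mem t ht
  have h_bdry := h.onBoundary _ h_mem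
  have ht_depth := h.depth_lt t ht
  have ht_depth' := F.depth_lt _ (h.inGrid_snd ht)
  by_cases h_out : lo ≤ F.along t.1 ∧ F.along t.1 < hi ∧ F.depth t.1 < min w m
  · -- a source in the rectangle is not on `e`, where it would belong to `π'`
    have h_depth : F.depth t.1 ≠ 0 := by
      intro h_depth
      have hq_lt := h.add_along_lt_perim hq
      have h_lpos := h.lpos_eq t.1 ((F.mem_edge _).2 ⟨h_bdry.inGrid, h_depth⟩) (by omega)
      have := h.ordBefore _ h_mem _ (h.tilde_mem p hp)
      change lpos m r t.1 < lpos m r (tilde p.2) at this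
      rw [h.lpos_tilde hp] at this
      omega
    have h_bdry' := (F.onBoundary_iff _ h_bdry.inGrid).1 h_bdry
    have hp_along := F.one_le_along _ (h.inGrid_snd hp)
    have hq_along := F.along_le _ (h.inGrid_snd hq)
    exact ⟨t.1, h.isRouting.fst_mem ht, h_bdry.inGrid, mem_rectRim.2 (by omega)⟩
  · obtain ⟨x, hx, hx_rim⟩ := F.exists_mem_rectRim P h_out ⟨ht_lo, ht_hi, by omega⟩
    exact ⟨x, hP x hx, hx_rim⟩

theorem card_along_le (h : Facing F r κ w π π' tilde M S) {lo hi : ℕ}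
    (h_lo : ∃ p ∈ M, F.along p.2 ≤ lo) (h_hi : ∃ q ∈ M, hi ≤ F.along q.2 + 1) :
    #{t ∈ M | lo ≤ F.along t.2 ∧ F.along t.2 < hi} ≤ hi - lo + 2 * w := by
  obtain ⟨p, hp, hp_lo⟩ := h_lo
  obtain ⟨q, hq, hq_hi⟩ := h_hi
  refine (card_le_card_of_pairwiseDisjoint (T := rectRim lo hi (min w m))
    (h.isRouting.pairwiseDisjoint.subset (filter_subset _ _)) F.injOn_coordinates
    fun t ht => ?_).trans ((card_rectRim_le lo hi (min w m)).trans (by omega))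
  obtain ⟨ht, ht_lo, ht_hi⟩ := mem_filter.1 ht
  exact h.exists_mem_rectRim hp hp_lo hq hq_hi ht ht_lo ht_hi

theorem exists_windowSystem (h : Facing F r κ w π π' tilde M S) (hm : 2 ≤ m) {z s k N : ℕ}
    (hs : 0 < s) (hk : 2 * w < k) (hN : 2 * k + 4 * (s + 2 * w) ≤ N) (hz : z * N ≤ #M) :
    Nonempty (WindowSystem M (fun p => lpos m r p.1) (fun p => F.along p.2) z s (s + 2 * w) m) := by
  classical
  refine _root_.exists_windowSystem (r := fun p q => (S q ∩ F.column p.2).Nonempty) hs hk hN hz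
    (fun p hp q hq hpq => h.isRouting.injOn_fst hp hq ?_)
    (fun p hp => h.card_column_meets_le hp)
    (fun p hp q hq => h.along_lt_along_of_lpos_lt hm hp hq)
    (fun lo hi => h.card_along_le) (fun p hp q hq => ?_)
  · exact lpos_inj hm (h.onBoundary _ (h.fst_mem p hp)) (h.onBoundary _ (h.fst_mem q hq)) hpq
  · have := F.along_le _ (h.inGrid_snd hp)
    have := F.one_le_along _ (h.inGrid_snd hq)
    omega

end Facing

namespace WindowSystem

variable {M : Finset DPair} {x : DPair → ℕ} {y : DPair → ℕ} {z s n L : ℕ}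

/-- The shortest interval containing the sources of the `i`-th group; the `σᵢ` of the theorem. -/
def sourceInterval (W : WindowSystem M x y z s n L) (m r : ℕ) (i : Fin z) : Finset Vtx :=
  hull m r ((W.group i).image Prod.fst)

/-- The interval at the positions of the `i`-th window, where `κ` is the position preceding that of
coordinate `1`; the `σ'ᵢ` of the theorem. -/
def destInterval (W : WindowSystem M x y z s n L) (m r κ : ℕ) (i : Fin z) : Finset Vtx :=
  arc m r (κ + W.lo i) (κ + W.hi i)

theorem ordBefore_sourceInterval {m r : ℕ}
    (W : WindowSystem M (fun p => lpos m r p.1) y z s n L) {i j : Fin z} (hij : i < j) :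
    OrdBefore m r (W.sourceInterval m r i) (W.sourceInterval m r j) := by
  refine OrdBefore.hull ?_
  simp only [OrdBefore, mem_image, forall_exists_index, and_imp, forall_apply_eq_imp_iff₂]
  exact W.lt_of_mem_group i j hij

theorem ordBefore_destInterval (W : WindowSystem M x y z s n L) (m r κ : ℕ) {i j : Fin z}
    (hij : j < i) : OrdBefore m r (W.destInterval m r κ i) (W.destInterval m r κ j) :=
  ordBefore_arc (by have := W.separated j i hij; omega)

theorem disjoint_sourceInterval {m r : ℕ}
    (W : WindowSystem M (fun p => lpos m r p.1) y z s n L) {i j : Fin z} (hij : i ≠ j) :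
    Disjoint (W.sourceInterval m r i) (W.sourceInterval m r j) :=
  hij.lt_or_gt.elim (fun hij => (W.ordBefore_sourceInterval hij).disjoint)
    fun hij => (W.ordBefore_sourceInterval hij).disjoint.symm

theorem disjoint_destInterval (W : WindowSystem M x y z s n L) (m r κ : ℕ) {i j : Fin z}
    (hij : i ≠ j) : Disjoint (W.destInterval m r κ i) (W.destInterval m r κ j) :=
  hij.lt_or_gt.elim (fun hij => (W.ordBefore_destInterval m r κ hij).disjoint.symm)
    fun hij => (W.ordBefore_destInterval m r κ hij).disjoint

end WindowSystem

namespace Facing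

variable {m : ℕ} {e : Finset Vtx} {F : EdgeFrame m e} {r κ w : ℕ} {π π' : Finset Vtx}
  {tilde : Vtx → Vtx} {M : Finset DPair} {S : DPair → Set Vtx} {z s n L : ℕ}

section SourceInterval

variable {y : DPair → ℕ} (W : WindowSystem M (fun p => lpos m r p.1) y z s n L) (i : Fin z)

theorem sourceInterval_subset (h : Facing F r κ w π π' tilde M S) (hm : 2 ≤ m)
    (hπ : IsBInterval m π) (hM : M.Nonempty) : W.sourceInterval m r i ⊆ π := by
  obtain ⟨p, hp⟩ := hM
  refine hull_subset hm hπ (fun v hv => ?_)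
    (image_subset_iff.2 fun q hq => h.fst_mem q (W.group_subset i hq))
  have h_lt : lpos m r v < lpos m r (tilde p.2) := h.ordBefore v hv _ (h.tilde_mem p hp)
  have := lpos_lt hm r (tilde p.2)
  omega

end SourceInterval

section DestInterval

variable {x : DPair → ℕ} (W : WindowSystem M x (fun p => F.along p.2) z s n L) (i : Fin z)

theorem exists_lpos_add_le (h : Facing F r κ w π π' tilde M S) :
    ∃ u ∈ π', lpos m r u + s ≤ κ + W.lo i := by
  obtain ⟨p, hp, hp_lo⟩ := W.exists_below i
  exact ⟨tilde p.2, h.tilde_mem p hp, by rw [h.lpos_tilde hp]; omega⟩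

theorem add_hi_add_le_perim (h : Facing F r κ w π π' tilde M S) :
    κ + W.hi i + s ≤ perim m := by
  obtain ⟨q, hq, hq_hi⟩ := W.exists_above i
  have := h.add_along_lt_perim hq
  omega

theorem isBInterval_destInterval (h : Facing F r κ w π π' tilde M S) (hm : 2 ≤ m) (hs : 0 < s) :
    IsBInterval m (W.destInterval m r κ i) := by
  have := W.lo_add_le i
  have := h.add_hi_add_le_perim W i
  exact isBInterval_arc hm (by omega) (by omega)

theorem card_destInterval_bounds (h : Facing F r κ w π π' tilde M S) (hm : 2 ≤ m) :
    s ≤ #(W.destInterval m r κ i) ∧ 2 * #(W.destInterval m r κ i) ≤ L := by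
  have := h.add_hi_add_le_perim W i
  have := W.lo_add_le i
  have := W.length_le i
  rw [WindowSystem.destInterval, card_arc hm (by omega)]
  omega

theorem destInterval_subset (h : Facing F r κ w π π' tilde M S) :
    W.destInterval m r κ i ⊆ π' := by
  intro v hv
  obtain ⟨hv, hv_lo, -⟩ := mem_arc.1 hv
  obtain ⟨u, hu, hu_lo⟩ := h.exists_lpos_add_le W i
  exact h.mem_of_le u hu v hv (by omega)

theorem along_mem_window (h : Facing F r κ w π π' tilde M S) {v : Vtx}
    (hv : v ∈ W.destInterval m r κ i) : W.lo i ≤ F.along v ∧ F.along v < W.hi i := by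
  have hv' := h.destInterval_subset W i hv
  obtain ⟨-, hv_lo, hv_hi⟩ := mem_arc.1 hv
  rw [h.lpos_eq v (h.subset_edge hv') (h.lt_perim v hv')] at hv_lo hv_hi
  omega

theorem lt_cgap_of_mem_destInterval (h : Facing F r κ w π π' tilde M S) (hm : 2 ≤ m) {u v : Vtx}
    (hu : u ∈ π) (hv : v ∈ W.destInterval m r κ i) : s < cgap m u v := by
  obtain ⟨hv, hv_lo, hv_hi⟩ := mem_arc.1 hv
  obtain ⟨t, ht, ht_lo⟩ := h.exists_lpos_add_le W i
  have h_lt : lpos m r u < lpos m r t := h.ordBefore u hu t ht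
  have := h.add_hi_add_le_perim W i
  exact lt_cgap hm (r := r) (h.onBoundary u hu) hv (by omega) (by omega)

theorem lt_cgap_of_mem_destInterval_of_ne (h : Facing F r κ w π π' tilde M S) (hm : 2 ≤ m)
    {i j : Fin z} (hij : i ≠ j) {u v : Vtx} (hu : u ∈ W.destInterval m r κ i)
    (hv : v ∈ W.destInterval m r κ j) : s < cgap m u v := by
  wlog h_lt : j < i generalizing i j u v
  · exact cgap_comm m v u ▸ this hij.symm hv hu (hij.lt_of_le (not_lt.1 h_lt))
  obtain ⟨hu, hu_lo, hu_hi⟩ := mem_arc.1 hu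
  obtain ⟨hv, hv_lo, hv_hi⟩ := mem_arc.1 hv
  have := h.add_hi_add_le_perim W j
  have := W.separated j i h_lt
  exact lt_cgap hm (r := r) hu hv (by omega) (by omega)

theorem le_dist_other_edge (h : Facing F r κ w π π' tilde M S) {e' : Finset Vtx}
    (he' : e' ∈ boundaryEdges m) (hne : e' ≠ e) {v u : Vtx} (hv : v ∈ W.destInterval m r κ i)
    (hu : u ∈ e') : s ≤ (gridG m).dist v u := by
  obtain ⟨hv_grid, hv_depth⟩ := (F.mem_edge v).1 (h.subset_edge (h.destInterval_subset W i hv))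
  obtain ⟨hu_grid, hu_far⟩ := F.mem_other_edge e' he' hne u hu
  have hv_along := h.along_mem_window W i hv
  obtain ⟨p, hp, hp_lo⟩ := W.exists_below i
  obtain ⟨q, hq, hq_hi⟩ := W.exists_above i
  have := F.one_le_along _ (h.inGrid_snd hp)
  have := F.along_le _ (h.inGrid_snd hq)
  have := F.le_dist hv_grid hu_grid
  omega

end DestInterval

theorem group_subset_filter (h : Facing F r κ w π π' tilde M S)
    (W : WindowSystem M (fun p => lpos m r p.1) (fun p => F.along p.2) z s n L) (i : Fin z) :
    W.group i ⊆
      M.filter fun p => p.1 ∈ W.sourceInterval m r i ∧ tilde p.2 ∈ W.destInterval m r κ i := by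
  intro p hp
  have hpM := W.group_subset i hp
  have h_window := W.mem_window i p hp
  have h_tilde := (F.mem_edge _).1 (h.subset_edge (h.tilde_mem p hpM))
  refine mem_filter.2 ⟨hpM, mem_hull_of_mem (h.onBoundary _ (h.fst_mem p hpM))
    (mem_image_of_mem _ hp), mem_arc.2 ⟨(F.onBoundary_iff _ h_tilde.1).2 (Or.inl h_tilde.2), ?_⟩⟩
  rw [h.lpos_tilde hpM]
  omega

end Facing

theorem exists_facing {m : ℕ} (hm : 2 ≤ m) {w : ℕ} {e π π' : Finset Vtx} (F : EdgeFrame m e)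
    (hπ : IsBInterval m π) (hπ' : IsBInterval m π') (hππ' : Disjoint π π') (h_edge : π' ⊆ e)
    {tilde : Vtx → Vtx} {M : Finset DPair}
    (h_tilde : ∀ p ∈ M, ∀ b, OnBoundary m b →
      (gridG m).dist p.2 (tilde p.2) ≤ (gridG m).dist p.2 b)
    (hs : ∀ p ∈ M, p.1 ∈ π) (ht : ∀ p ∈ M, tilde p.2 ∈ π')
    (h_dist : ∀ p ∈ M, (gridG m).dist p.2 (tilde p.2) < w)
    (h_route : NodeDisjointRoutable (gridG m) M) :
    ∃ r κ S, Facing F r κ w π π' tilde M S := by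
  obtain ⟨r, κ, h_final⟩ := F.exists_finalSegment hm hπ' h_edge
  obtain ⟨S, hS⟩ := h_route.exists_isRouting
  have h_bdry (v : Vtx) (hv : v ∈ π) : OnBoundary m v := hπ.onBoundary hm hv
  have h_foot (p : DPair) (hp : p ∈ M) : F.along (tilde p.2) = F.along p.2 ∧
      F.depth p.2 = (gridG m).dist p.2 (tilde p.2) := by
    obtain ⟨P, -⟩ := hS.exists_walk p hp
    exact F.foot_of_closest (inGrid_of_mem_support P (h_bdry _ (hs p hp)).inGrid _
      P.end_mem_support) (h_edge (ht p hp)) (h_tilde p hp)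
  exact ⟨r, κ, S, h_final, hS, h_bdry, hs, ht, fun p hp => (h_foot p hp).1,
    fun p hp => (h_foot p hp).2 ▸ h_dist p hp, h_final.ordBefore h_bdry hππ'⟩

/-! ### The partitioning theorem -/

theorem statement6_general
    (m : ℕ) (hm : 2 ≤ m) (d : ℕ) (hd : 0 < d)
    (π π' : Finset Vtx) (hπ : IsBInterval m π) (hπ' : IsBInterval m π')
    (hππ' : Disjoint π π') (hπ'e : ∃ e ∈ boundaryEdges m, π' ⊆ e)
    (tilde : Vtx → Vtx)
    (M' : Finset DPair)
    (htilde : ∀ p ∈ M', ∀ b : Vtx, OnBoundary m b →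
      (gridG m).dist p.2 (tilde p.2) ≤ (gridG m).dist p.2 b)
    (hs : ∀ p ∈ M', p.1 ∈ π) (ht : ∀ p ∈ M', tilde p.2 ∈ π')
    (hdd : ∀ p ∈ M', (gridG m).dist p.2 (tilde p.2) < 2 * d)
    (hroute : NodeDisjointRoutable (gridG m) M')
    (z : ℕ) (hz : z * (90 * d) ≤ M'.card) :
    ∃ σ : Fin z → Finset Vtx, ∃ σ' : Fin z → Finset Vtx,
      (∀ i, IsBInterval m (σ i) ∧ σ i ⊆ π) ∧
      (∀ i, IsBInterval m (σ' i) ∧ σ' i ⊆ π') ∧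
      (∀ i j, i ≠ j → Disjoint (σ i) (σ j)) ∧
      (∀ i j, i ≠ j → Disjoint (σ' i) (σ' j)) ∧
      (∃ r : ℕ,
        (∀ i j : Fin z, i < j → OrdBefore m r (σ i) (σ j)) ∧
        (∀ i j : Fin z, OrdBefore m r (σ i) (σ' j)) ∧
        (∀ i j : Fin z, j < i → OrdBefore m r (σ' i) (σ' j))) ∧
      (∀ i j : Fin z, ∀ u ∈ σ i, ∀ v ∈ σ' j, 16 * d < cgap m u v) ∧
      (∀ i j : Fin z, i ≠ j → ∀ u ∈ σ' i, ∀ v ∈ σ' j, 16 * d < cgap m u v) ∧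
      (∀ i, 16 * d ≤ (σ' i).card ∧ 2 * (σ' i).card ≤ m) ∧
      (∃ e ∈ boundaryEdges m, π' ⊆ e ∧
        ∀ e' ∈ boundaryEdges m, e' ≠ e →
          ∀ i : Fin z, ∀ v ∈ σ' i, ∀ u ∈ e', 16 * d ≤ (gridG m).dist v u) ∧
      (∀ i : Fin z, ∃ N ⊆ M'.filter (fun p => p.1 ∈ σ i ∧ tilde p.2 ∈ σ' i),
        d ≤ N.card ∧ NodeDisjointRoutable (gridG m) N) := by
  obtain ⟨e, he, hπ'e⟩ := hπ'e
  obtain ⟨F⟩ := exists_edgeFrame hm e he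
  obtain ⟨r, κ, S, h⟩ := exists_facing hm F hπ hπ' hππ' hπ'e htilde hs ht hdd hroute
  obtain ⟨W⟩ := h.exists_windowSystem (s := 16 * d) (k := 5 * d) hm (by omega) (by omega)
    (by omega) hz
  have h_card (i : Fin z) : d ≤ #(W.group i) := by have := W.le_card i; omega
  have h_nonempty (i : Fin z) : (W.group i).Nonempty := card_pos.1 (hd.trans_le (h_card i))
  have h_source (i : Fin z) : W.sourceInterval m r i ⊆ π :=
    h.sourceInterval_subset W i hm hπ ((h_nonempty i).mono (W.group_subset i))
  have h_dest (i : Fin z) : W.destInterval m r κ i ⊆ π' := h.destInterval_subset W i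
  exact ⟨W.sourceInterval m r, W.destInterval m r κ,
    fun i => ⟨isBInterval_hull hm r ((h_nonempty i).image _), h_source i⟩,
    fun i => ⟨h.isBInterval_destInterval W i hm (by omega), h_dest i⟩,
    fun i j => W.disjoint_sourceInterval, fun i j => W.disjoint_destInterval m r κ,
    ⟨r, fun i j => W.ordBefore_sourceInterval,
      fun i j u hu v hv => h.ordBefore u (h_source i hu) v (h_dest j hv),
      fun i j => W.ordBefore_destInterval m r κ⟩,
    fun i j u hu v => h.lt_cgap_of_mem_destInterval W j hm (h_source i hu),
    fun i j hij u hu v => h.lt_cgap_of_mem_destInterval_of_ne W hm hij hu,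
    fun i => h.card_destInterval_bounds W i hm,
    ⟨e, he, hπ'e, fun e' he' hne i v hv u => h.le_dist_other_edge W i he' hne hv⟩,
    fun i => ⟨W.group i, h.group_subset_filter W i, h_card i, hroute.mono (W.group_subset i)⟩⟩

theorem mul_le_of_eq_ceil_div_sub_one {n c z : ℕ} (hc : 0 < c)
    (hz : z = ⌈(n : ℝ) / c⌉₊ - 1) : z * c ≤ n := by
  obtain rfl | h_pos := Nat.eq_zero_or_pos z
  · simp
  · have h_lt : z < ⌈(n : ℝ) / c⌉₊ := by omega
    rw [Nat.lt_ceil, lt_div_iff₀ (by exact_mod_cast hc)] at h_lt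
    exact_mod_cast h_lt.le

/-- Main partitioning theorem. -/
theorem statement6
    (m : ℕ) (hm : 2 ≤ m) (d : ℕ) (hd : 0 < d)
    (π π' : Finset Vtx) (hπ : IsBInterval m π) (hπ' : IsBInterval m π')
    (hππ' : Disjoint π π')
    (hπe : ∃ e ∈ boundaryEdges m, π ⊆ e) (hπ'e : ∃ e ∈ boundaryEdges m, π' ⊆ e)
    (tilde : Vtx → Vtx)
    (M' : Finset DPair)
    (htilde : ∀ p ∈ M', OnBoundary m (tilde p.2) ∧
      ∀ b : Vtx, OnBoundary m b →
        (gridG m).dist p.2 (tilde p.2) ≤ (gridG m).dist p.2 b)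
    (hs : ∀ p ∈ M', p.1 ∈ π) (ht : ∀ p ∈ M', tilde p.2 ∈ π')
    (hdd : ∀ p ∈ M', d ≤ (gridG m).dist p.2 (tilde p.2) ∧
      (gridG m).dist p.2 (tilde p.2) < 2 * d)
    (hbig : 1024 * d ≤ M'.card)
    (hroute : NodeDisjointRoutable (gridG m) M')
    (z : ℕ) (hz : z = ⌈(M'.card : ℝ) / (160 * d)⌉₊ - 1) :
    ∃ σ : Fin z → Finset Vtx, ∃ σ' : Fin z → Finset Vtx,
      (∀ i, IsBInterval m (σ i) ∧ σ i ⊆ π) ∧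
      (∀ i, IsBInterval m (σ' i) ∧ σ' i ⊆ π') ∧
      (∀ i j, i ≠ j → Disjoint (σ i) (σ j)) ∧
      (∀ i j, i ≠ j → Disjoint (σ' i) (σ' j)) ∧
      -- (1) σ₁,…,σ_z,σ'_z,…,σ'₁ appear on Γ in this circular order
      (∃ r : ℕ,
        (∀ i j : Fin z, i < j → OrdBefore m r (σ i) (σ j)) ∧
        (∀ i j : Fin z, OrdBefore m r (σ i) (σ' j)) ∧
        (∀ i j : Fin z, j < i → OrdBefore m r (σ' i) (σ' j))) ∧
      -- (2) separation by at least 16d boundary vertices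
      (∀ i j : Fin z, ∀ u ∈ σ i, ∀ v ∈ σ' j, 16 * d < cgap m u v) ∧
      (∀ i j : Fin z, i ≠ j → ∀ u ∈ σ' i, ∀ v ∈ σ' j, 16 * d < cgap m u v) ∧
      -- (3) size of σ'ᵢ and distance from the other boundary edges
      (∀ i, 16 * d ≤ (σ' i).card ∧ 2 * (σ' i).card ≤ m) ∧
      (∃ e ∈ boundaryEdges m, π' ⊆ e ∧
        ∀ e' ∈ boundaryEdges m, e' ≠ e →
          ∀ i : Fin z, ∀ v ∈ σ' i, ∀ u ∈ e', 16 * d ≤ (gridG m).dist v u) ∧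
      -- (4) each induced instance has optimal value at least d
      (∀ i : Fin z, ∃ N ⊆ M'.filter (fun p => p.1 ∈ σ i ∧ tilde p.2 ∈ σ' i),
        d ≤ N.card ∧ NodeDisjointRoutable (gridG m) N) := by
  have hz_le : z * (160 * d) ≤ #M' :=
    mul_le_of_eq_ceil_div_sub_one (by omega) (by exact_mod_cast hz)
  exact statement6_general m hm d hd π π' hπ hπ' hππ' hπ'e tilde M' (fun p hp => (htilde p hp).2)
    hs ht (fun p hp => (hdd p hp).2) hroute z (hz_le.trans' (by gcongr; norm_num))
end

section
/- Let η ≥ 2 and ρ ≥ 1 be integers, set d_h = η^{ρ−h+3} for 1 ≤ h ≤ ρ, and let ℓ' be a positive integral multiple of d₁ = η^{ρ+2}. Let G̃ be the ℓ'×ℓ' grid. Then there exist 4^ρ hierarchical systems of squares H̃₁,…,H̃_{4^ρ} of G̃ such that every vertex of G̃ belongs to exactly one of them. -/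
open Finset

/-- A hierarchical system of squares `Qs 1, …, Qs ρ`: level `h` is a `d_h`-canonical family
of squares of the ℓ'×ℓ' grid (with `d_h = η^(ρ-h+3)`), and every level-`h` square is
contained in a level-`(h-1)` square. -/
def IsHierSquares (W η ρ : ℕ) (Qs : ℕ → Finset SquareSpec) : Prop :=
  (∀ h, 1 ≤ h → h ≤ ρ → IsCanonicalSquares W (η ^ (ρ - h + 3)) (Qs h)) ∧
    ∀ h, 1 < h → h ≤ ρ → ∀ Q ∈ Qs h, ∃ Q' ∈ Qs (h - 1), Q.1 ⊆ Q'.1 ∧ Q.2 ⊆ Q'.2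

/-!
Cut `{1, …, W}` into consecutive blocks of length `d h`, for every level `h`; the divisibility
`d h ∣ d (h - 1)` makes the level-`h` blocks refine those of level `h - 1`. Distinct blocks of one
level whose indices have the same parity have a whole block between them, hence are
`d h`-separated. A vector of `ρ` parities thus selects a nested sequence of canonical interval
families, made of the blocks whose ancestors all have the prescribed parities, and every point is
covered at the last level for exactly one vector, that of its own block parities. Choosing one
vector per coordinate gives `2 ^ ρ * 2 ^ ρ = 4 ^ ρ` systems of squares.
-/

/-- The generalization of `IsHierSquares` to arbitrary side lengths `d 1, …, d ρ`. -/
def IsHierSquaresOfSides (W : ℕ) (d : ℕ → ℕ) (ρ : ℕ) (Qs : ℕ → Finset SquareSpec) : Prop :=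
  (∀ h, 1 ≤ h → h ≤ ρ → IsCanonicalSquares W (d h) (Qs h)) ∧
    ∀ h, 1 < h → h ≤ ρ → ∀ Q ∈ Qs h, ∃ Q' ∈ Qs (h - 1), Q.1 ⊆ Q'.1 ∧ Q.2 ⊆ Q'.2

/-- The one-dimensional analogue of `IsHierSquaresOfSides`: nested canonical sets of intervals of
lengths `d 1, …, d ρ`. -/
def IsHierIntervals (W : ℕ) (d : ℕ → ℕ) (ρ : ℕ) (Is : ℕ → Finset (Finset ℕ)) : Prop :=
  (∀ h, 1 ≤ h → h ≤ ρ → IsCanonicalIntervals W (d h) (Is h)) ∧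
    ∀ h, 1 < h → h ≤ ρ → ∀ I ∈ Is h, ∃ J ∈ Is (h - 1), I ⊆ J

lemma IsHierIntervals.product {W ρ : ℕ} {d : ℕ → ℕ} {Is Js : ℕ → Finset (Finset ℕ)}
    (hI : IsHierIntervals W d ρ Is) (hJ : IsHierIntervals W d ρ Js) :
    IsHierSquaresOfSides W d ρ (fun h => Is h ×ˢ Js h) := by
  refine ⟨fun h h1 hh => ⟨_, _, hI.1 h h1 hh, hJ.1 h h1 hh, rfl⟩, fun h h1 hh Q hQ => ?_⟩
  obtain ⟨I, hIs, hQI⟩ := hI.2 h h1 hh Q.1 (mem_product.1 hQ).1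
  obtain ⟨J, hJs, hQJ⟩ := hJ.2 h h1 hh Q.2 (mem_product.1 hQ).2
  exact ⟨(I, J), mk_mem_product hIs hJs, hQI, hQJ⟩

lemma exists_mem_product_memSquare_iff {Is Js : Finset (Finset ℕ)} {v : Vtx} :
    (∃ Q ∈ Is ×ˢ Js, memSquare v Q) ↔ (∃ I ∈ Is, v.1 ∈ I) ∧ ∃ J ∈ Js, v.2 ∈ J := by
  constructor
  · rintro ⟨Q, hQ, hv⟩
    exact ⟨⟨Q.1, (mem_product.1 hQ).1, hv.1⟩, ⟨Q.2, (mem_product.1 hQ).2, hv.2⟩⟩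
  · rintro ⟨⟨I, hI, hvI⟩, ⟨J, hJ, hvJ⟩⟩
    exact ⟨(I, J), mk_mem_product hI hJ, hvI, hvJ⟩

lemma div_eq_div_of_dvd_of_div_eq_div {d D m n : ℕ} (hdD : d ∣ D) (hmn : m / d = n / d) :
    m / D = n / D := by
  obtain ⟨c, rfl⟩ := hdD
  rw [← Nat.div_div_eq_div_mul, hmn, Nat.div_div_eq_div_mul]

/-- The block containing the point `n + 1` when the positive integers are cut into consecutive
blocks of length `d`. Points are shifted by one, so that `n / d` is the index of this block. -/
def block (d n : ℕ) : Finset ℕ := Icc (n / d * d + 1) ((n / d + 1) * d)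

lemma succ_mem_block_iff {d m n : ℕ} (hd : 0 < d) : m + 1 ∈ block d n ↔ m / d = n / d := by
  rw [block, mem_Icc, Nat.div_eq_iff hd, add_mul, one_mul]
  omega

lemma card_block (d n : ℕ) : #(block d n) = d := by
  rw [block, Nat.card_Icc, add_mul, one_mul]
  omega

lemma isIntervalIn_block {W d n : ℕ} (hdW : d ∣ W) (hn : n < W) :
    IsIntervalIn W (block d n) := by
  have hd : 0 < d := Nat.pos_of_dvd_of_pos hdW (by omega)
  have hlt : n / d < W / d := Nat.div_lt_div_of_lt_of_dvd hdW hn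
  refine ⟨_, _, Nat.le_add_left 1 _, ?_, ?_, rfl⟩
  · rw [add_mul, one_mul]
    omega
  · exact (Nat.mul_le_mul_right d hlt).trans (Nat.div_mul_le_self W d)

lemma block_subset_block {d D : ℕ} (hdD : d ∣ D) (hD : 0 < D) (n : ℕ) :
    block d n ⊆ block D n := by
  intro x hx
  obtain ⟨m, rfl⟩ := Nat.exists_eq_add_of_le' ((Nat.le_add_left 1 _).trans (mem_Icc.1 hx).1)
  rw [succ_mem_block_iff (Nat.pos_of_dvd_of_pos hdD hD)] at hx
  exact (succ_mem_block_iff hD).2 (div_eq_div_of_dvd_of_div_eq_div hdD hx)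

lemma intSeparated_block {d m n : ℕ} (hne : m / d ≠ n / d) (hpar : m / d ≡ n / d [MOD 2]) :
    IntSeparated d (block d m) (block d n) := by
  intro i hi j hj
  wlog hlt : m / d < n / d generalizing m n i j
  · rw [abs_sub_comm]
    exact this hne.symm hpar.symm j hj i hi (by omega)
  have hgap : m / d + 2 ≤ n / d := by
    rw [Nat.ModEq] at hpar
    omega
  have hmul : (m / d + 2) * d ≤ n / d * d := Nat.mul_le_mul_right d hgap
  rw [block, mem_Icc] at hi hj
  rw [add_mul] at hi hmul
  rw [lt_abs]
  omega

/-- The parities, for each of the levels `1, …, ρ`, of the index of the block of length `d h`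
containing the point `n + 1`. Level `h` is stored at position `h - 1`. -/
def blockParities (d : ℕ → ℕ) (ρ n : ℕ) : Fin ρ → ZMod 2 :=
  fun j => ((n / d (j + 1) : ℕ) : ZMod 2)

/-- The blocks of level `h` in `{1, …, W}` whose ancestors at levels `1, …, h` have the index
parities prescribed by `a`. -/
def parityBlocks (W : ℕ) (d : ℕ → ℕ) {ρ : ℕ} (a : Fin ρ → ZMod 2) (h : ℕ) :
    Finset (Finset ℕ) :=
  {n ∈ range W | ∀ j : Fin ρ, j < h → blockParities d ρ n j = a j}.image (block (d h))

section ParityBlocks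

variable {W ρ : ℕ} {d : ℕ → ℕ} {a : Fin ρ → ZMod 2}

lemma mem_parityBlocks_iff {h : ℕ} {I : Finset ℕ} :
    I ∈ parityBlocks W d a h ↔
      ∃ n < W, (∀ j : Fin ρ, j < h → blockParities d ρ n j = a j) ∧ block (d h) n = I := by
  simp only [parityBlocks, mem_image, mem_filter, mem_range, and_assoc]

lemma isCanonicalIntervals_parityBlocks {h : ℕ} (h1 : 1 ≤ h) (hh : h ≤ ρ) (hdW : d h ∣ W) :
    IsCanonicalIntervals W (d h) (parityBlocks W d a h) := by
  constructor
  · intro I hI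
    obtain ⟨n, hn, -, rfl⟩ := mem_parityBlocks_iff.1 hI
    exact ⟨isIntervalIn_block hdW hn, card_block _ _⟩
  · intro I hI J hJ hIJ
    obtain ⟨m, -, hm, rfl⟩ := mem_parityBlocks_iff.1 hI
    obtain ⟨n, -, hn, rfl⟩ := mem_parityBlocks_iff.1 hJ
    have hne : m / d h ≠ n / d h := fun heq => hIJ (by rw [block, block, heq])
    obtain ⟨g, rfl⟩ := Nat.exists_eq_add_of_le' h1
    have hpar := (hm ⟨g, hh⟩ g.lt_succ_self).trans (hn ⟨g, hh⟩ g.lt_succ_self).symm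
    exact intSeparated_block hne ((ZMod.natCast_eq_natCast_iff _ _ _).1 hpar)

lemma exists_superset_mem_parityBlocks {g h : ℕ} (hgh : g ≤ h) (hdvd : d h ∣ d g)
    (hdW : d g ∣ W) {I : Finset ℕ} (hI : I ∈ parityBlocks W d a h) :
    ∃ J ∈ parityBlocks W d a g, I ⊆ J := by
  obtain ⟨n, hn, hpar, rfl⟩ := mem_parityBlocks_iff.1 hI
  have hpos : 0 < d g := Nat.pos_of_dvd_of_pos hdW (by omega)
  exact ⟨block (d g) n,
    mem_parityBlocks_iff.2 ⟨n, hn, fun j hj => hpar j (hj.trans_le hgh), rfl⟩,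
    block_subset_block hdvd hpos n⟩

lemma isHierIntervals_parityBlocks
    (hd : ∀ g h, 1 ≤ g → g ≤ h → h ≤ ρ → d h ∣ d g) (hdW : d 1 ∣ W) :
    IsHierIntervals W d ρ (parityBlocks W d a) := by
  have hdvdW : ∀ h, 1 ≤ h → h ≤ ρ → d h ∣ W := fun h h1 hh => (hd 1 h le_rfl h1 hh).trans hdW
  refine ⟨fun h h1 hh => isCanonicalIntervals_parityBlocks h1 hh (hdvdW h h1 hh), ?_⟩
  intro h h1 hh I hI
  exact exists_superset_mem_parityBlocks (h.sub_le 1) (hd (h - 1) h (by omega) (by omega) hh)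
    (hdvdW (h - 1) (by omega) (by omega)) hI

lemma exists_succ_mem_parityBlocks_iff {n : ℕ}
    (hd : ∀ g, 1 ≤ g → g ≤ ρ → d ρ ∣ d g) (hdW : d ρ ∣ W) (hn : n < W) :
    (∃ I ∈ parityBlocks W d a ρ, n + 1 ∈ I) ↔ a = blockParities d ρ n := by
  have hpos : 0 < d ρ := Nat.pos_of_dvd_of_pos hdW (by omega)
  constructor
  · rintro ⟨I, hI, hnI⟩
    obtain ⟨m, -, hpar, rfl⟩ := mem_parityBlocks_iff.1 hI
    rw [succ_mem_block_iff hpos] at hnI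
    funext j
    have hdiv : n / d (j + 1) = m / d (j + 1) :=
      div_eq_div_of_dvd_of_div_eq_div (hd (j + 1) (by omega) j.isLt) hnI
    rw [← hpar j j.isLt, blockParities, blockParities, hdiv]
  · rintro rfl
    exact ⟨block (d ρ) n, mem_parityBlocks_iff.2 ⟨n, hn, fun _ _ => rfl, rfl⟩,
      (succ_mem_block_iff hpos).2 rfl⟩

end ParityBlocks

theorem statement7_general (d : ℕ → ℕ) (ρ W : ℕ) (hρ : 1 ≤ ρ)
    (hd : ∀ g h, 1 ≤ g → g ≤ h → h ≤ ρ → d h ∣ d g) (hdW : d 1 ∣ W) :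
    ∃ H : Fin (4 ^ ρ) → ℕ → Finset SquareSpec,
      (∀ i, IsHierSquaresOfSides W d ρ (H i)) ∧
      ∀ v : Vtx, 1 ≤ v.1 → v.1 ≤ W → 1 ≤ v.2 → v.2 ≤ W →
        ∃! i : Fin (4 ^ ρ), ∃ Q ∈ (H i) ρ, memSquare v Q := by
  have hcard : Fintype.card (Fin (4 ^ ρ)) =
      Fintype.card ((Fin ρ → ZMod 2) × (Fin ρ → ZMod 2)) := by
    simp [← mul_pow]
  let e := Fintype.equivOfCardEq hcard
  refine ⟨fun i h => parityBlocks W d (e i).1 h ×ˢ parityBlocks W d (e i).2 h,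
    fun i => (isHierIntervals_parityBlocks hd hdW).product (isHierIntervals_parityBlocks hd hdW),
    ?_⟩
  rintro ⟨x, y⟩ hx hxW hy hyW
  obtain ⟨m, rfl⟩ := Nat.exists_eq_add_of_le' hx
  obtain ⟨n, rfl⟩ := Nat.exists_eq_add_of_le' hy
  have hdρ : ∀ g, 1 ≤ g → g ≤ ρ → d ρ ∣ d g := fun g h1 hg => hd g ρ h1 hg le_rfl
  have hdρW : d ρ ∣ W := (hdρ 1 le_rfl hρ).trans hdW
  simp only [exists_mem_product_memSquare_iff, exists_succ_mem_parityBlocks_iff hdρ hdρW hxW,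
    exists_succ_mem_parityBlocks_iff hdρ hdρW hyW, ← Prod.mk_inj, Prod.mk.eta]
  exact e.bijective.existsUnique _

/-- Claim: hierarchical systems of squares covering the grid.
There are `4^ρ` hierarchical systems of squares of the ℓ'×ℓ' grid such that every vertex of
the grid belongs (i.e. lies in a level-ρ square) to exactly one of them. -/
theorem statement7
    (η ρ W : ℕ) (hη : 2 ≤ η) (hρ : 1 ≤ ρ) (hW : 0 < W)
    (hdvd : η ^ (ρ + 2) ∣ W) :
    ∃ H : Fin (4 ^ ρ) → ℕ → Finset SquareSpec,
      (∀ i, IsHierSquares W η ρ (H i)) ∧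
      ∀ v : Vtx, 1 ≤ v.1 → v.1 ≤ W → 1 ≤ v.2 → v.2 ≤ W →
        ∃! i : Fin (4 ^ ρ), ∃ Q ∈ (H i) ρ, memSquare v Q := by
  exact statement7_general (fun h => η ^ (ρ - h + 3)) ρ W hρ
    (fun _ _ _ _ _ => pow_dvd_pow η (by omega)) ((pow_dvd_pow η (by omega)).trans hdvd)
end

section
/- Let F be a directed forest with n ≥ 2 vertices. Then there exists a partition {Y₁,…,Y_{⌈log₂ n⌉}} of the vertex set of F into at most ⌈log₂ n⌉ (possibly empty) parts such that for each j: the induced sub-digraph F[Y_j] is a vertex-disjoint union of directed paths, and moreover, for all v, v' ∈ Y_j such that F contains a directed path from v to v', the vertices v and v' lie on the same directed path of F[Y_j]. -/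
/-!
Give `v` the level `k` when its subtree has at least `2 ^ (k + 1) - 1` and fewer than
`2 ^ (k + 2) - 1` vertices. If `b` had two children of its own level `k`, their disjoint subtrees
together with `b` itself would make up at least `2 ^ (k + 2) - 1` vertices, so at most one child
of `b` shares its level. Levels increase weakly along directed paths, hence a path whose endpoints
have the same level never leaves that level. Since `n + 1 < 2 ^ (⌈log₂ n⌉ + 1)` for `n ≥ 2`, all
levels are below `⌈log₂ n⌉`.
-/

lemma log_two_lt_log_two_of_add_le {x y z : ℕ} (hx : x ≠ 0) (hy : y ≠ 0)
    (hlog : Nat.log 2 x = Nat.log 2 y) (hz : x + y ≤ z) : Nat.log 2 x < Nat.log 2 z := by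
  refine Nat.le_log_of_pow_le one_lt_two ?_
  calc
    2 ^ (Nat.log 2 x + 1) = 2 ^ Nat.log 2 x + 2 ^ Nat.log 2 y := by rw [← hlog, pow_succ, mul_two]
    _ ≤ x + y := add_le_add (Nat.pow_log_le_self 2 hx) (Nat.pow_log_le_self 2 hy)
    _ ≤ z := hz

lemma add_one_lt_two_pow_clog_succ {n : ℕ} (hn : 2 ≤ n) : n + 1 < 2 ^ (Nat.clog 2 n + 1) := by
  have hle : n ≤ 2 ^ Nat.clog 2 n := Nat.le_pow_clog one_lt_two n
  rw [pow_succ]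
  omega

section

open Relation

variable {V : Type*} {r : V → V → Prop}

lemma reflTransGen_fiber_of_monotone {α : Type*} [PartialOrder α] {f : V → α}
    (hf : ∀ a b, r a b → f a ≤ f b) {v w : V} (hpath : ReflTransGen r v w) (hvw : f v = f w) :
    ReflTransGen (fun a b => r a b ∧ f a = f v ∧ f b = f v) v w := by
  have hmono {a b : V} (h : ReflTransGen r a b) : f a ≤ f b := by
    simpa only [reflTransGen_eq_self] using h.lift (p := (· ≤ ·)) f hf
  induction hpath with
  | refl => exact .refl
  | @tail b c hvb hbc ih =>
    have hvb_eq : f v = f b := (hmono hvb).antisymm (hvw ▸ hf b c hbc)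
    exact (ih hvb_eq).tail ⟨hbc, hvb_eq.symm, hvw.symm⟩

/-- The subtree rooted at `v`, `v` included. Edges point towards the root, so these are the
vertices from which `v` can be reached. -/
def subtree (r : V → V → Prop) (v : V) : Set V :=
  {u | ReflTransGen r u v}

lemma self_mem_subtree (v : V) : v ∈ subtree r v :=
  ReflTransGen.refl

lemma ncard_subtree_pos {v : V} (hfin : (subtree r v).Finite) : 0 < (subtree r v).ncard :=
  (Set.ncard_pos hfin).2 ⟨v, self_mem_subtree v⟩

lemma subtree_subset_subtree {v w : V} (h : ReflTransGen r v w) : subtree r v ⊆ subtree r w :=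
  fun _ hu => ReflTransGen.trans hu h

lemma notMem_subtree_of_rel {a b : V} (hb : ¬ TransGen r b b) (hab : r a b) :
    b ∉ subtree r a :=
  fun hba => hb (TransGen.tail' hba hab)

lemma not_reflTransGen_of_rel_of_rel (hr : Relator.RightUnique r) {a a' b : V}
    (hb : ¬ TransGen r b b) (ha : r a b) (ha' : r a' b) (hne : a ≠ a') :
    ¬ ReflTransGen r a a' := by
  intro hpath
  obtain rfl | ⟨c, hac, hca'⟩ := hpath.cases_head
  · exact hne rfl
  · obtain rfl : b = c := hr ha hac
    exact notMem_subtree_of_rel hb ha' hca'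

lemma disjoint_subtree_of_rel_of_rel (hr : Relator.RightUnique r) {a a' b : V}
    (hb : ¬ TransGen r b b) (ha : r a b) (ha' : r a' b) (hne : a ≠ a') :
    Disjoint (subtree r a) (subtree r a') := by
  rw [Set.disjoint_left]
  intro u hua hua'
  obtain h | h := ReflTransGen.total_of_right_unique hr hua hua'
  · exact not_reflTransGen_of_rel_of_rel hr hb ha ha' hne h
  · exact not_reflTransGen_of_rel_of_rel hr hb ha' ha hne.symm h

lemma ncard_subtree_add_ncard_subtree_lt (hr : Relator.RightUnique r) {a a' b : V}
    (hb : ¬ TransGen r b b) (hfin : (subtree r b).Finite) (ha : r a b) (ha' : r a' b)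
    (hne : a ≠ a') :
    (subtree r a).ncard + (subtree r a').ncard < (subtree r b).ncard := by
  have hsub : subtree r a ⊆ subtree r b := subtree_subset_subtree (.single ha)
  have hsub' : subtree r a' ⊆ subtree r b := subtree_subset_subtree (.single ha')
  rw [← Set.ncard_union_eq (disjoint_subtree_of_rel_of_rel hr hb ha ha' hne)
    (hfin.subset hsub) (hfin.subset hsub')]
  refine Set.ncard_lt_ncard ?_ hfin
  refine (Set.ssubset_iff_of_subset (Set.union_subset hsub hsub')).2
    ⟨b, self_mem_subtree b, ?_⟩
  rintro (h | h)
  · exact notMem_subtree_of_rel hb ha h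
  · exact notMem_subtree_of_rel hb ha' h

/-- The level of a vertex whose subtree has `s` vertices: the `k` with
`2 ^ (k + 1) ≤ s + 1 < 2 ^ (k + 2)`. Halving `s + 1` inside the logarithm makes levels start
at `0`. An infinite subtree has the junk size `0`, hence level `0`. -/
noncomputable def subtreeLevel (r : V → V → Prop) (v : V) : ℕ :=
  Nat.log 2 (((subtree r v).ncard + 1) / 2)

lemma subtreeLevel_le_subtreeLevel {v w : V} (hfin : (subtree r w).Finite)
    (h : ReflTransGen r v w) : subtreeLevel r v ≤ subtreeLevel r w := by
  have hcard := Set.ncard_le_ncard (subtree_subset_subtree h) hfin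
  unfold subtreeLevel
  gcongr

lemma subtreeLevel_lt {v : V} (hfin : (subtree r v).Finite) {k : ℕ}
    (hk : (subtree r v).ncard + 1 < 2 ^ (k + 1)) : subtreeLevel r v < k := by
  have hpos := ncard_subtree_pos hfin
  rw [pow_succ] at hk
  exact Nat.log_lt_of_lt_pow (by omega) (by omega)

lemma eq_of_rel_of_subtreeLevel_eq (hr : Relator.RightUnique r) {a a' b : V}
    (hb : ¬ TransGen r b b) (hfin : (subtree r b).Finite) (ha : r a b) (ha' : r a' b)
    (hlevel : subtreeLevel r a = subtreeLevel r b)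
    (hlevel' : subtreeLevel r a' = subtreeLevel r b) : a = a' := by
  by_contra hne
  have hcard := ncard_subtree_add_ncard_subtree_lt hr hb hfin ha ha' hne
  have hpos := ncard_subtree_pos (hfin.subset (subtree_subset_subtree (.single ha)))
  have hpos' := ncard_subtree_pos (hfin.subset (subtree_subset_subtree (.single ha')))
  have hlt : subtreeLevel r a < subtreeLevel r b :=
    log_two_lt_log_two_of_add_le (by omega) (by omega) (hlevel.trans hlevel'.symm) (by omega)
  exact hlt.ne hlevel

/-- The bound on subtree sizes is sharp: a complete binary tree with `2 ^ (k + 1) - 1` vertices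
needs `k + 1` parts. -/
theorem statement10_general (hr : Relator.RightUnique r) (hacyc : ∀ v, ¬ TransGen r v v)
    (hfin : ∀ v, (subtree r v).Finite) {k : ℕ}
    (hk : ∀ v, (subtree r v).ncard + 1 < 2 ^ (k + 1)) :
    ∃ Y : V → Fin k,
      (∀ b a a' : V, Y a = Y b → Y a' = Y b → r a b → r a' b → a = a') ∧
      ∀ v v' : V, Y v = Y v' → TransGen r v v' →
        ReflTransGen (fun a b => r a b ∧ Y a = Y v ∧ Y b = Y v) v v' := by
  let Y (v : V) : Fin k := ⟨subtreeLevel r v, subtreeLevel_lt (hfin v) (hk v)⟩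
  refine ⟨Y, ?_, ?_⟩
  · intro b a a' hab ha'b ha ha'
    exact eq_of_rel_of_subtreeLevel_eq hr (hacyc b) (hfin b) ha ha'
      (Fin.mk.inj hab) (Fin.mk.inj ha'b)
  · intro v v' hvv' hpath
    have hmono : ∀ a b, r a b → Y a ≤ Y b :=
      fun _ b h => subtreeLevel_le_subtreeLevel (hfin b) (.single h)
    exact reflTransGen_fiber_of_monotone hmono hpath.to_reflTransGen hvv'

end

/-- Claim: partitioning a directed forest into sets inducing disjoint
unions of directed paths.
A directed forest is given by its parent map `parent : V → Option V` (every vertex has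
out-degree at most 1), acyclic. There is a partition of `V` into at most `⌈log₂ n⌉` parts
(a labeling `Y : V → Fin ⌈log₂ n⌉`) such that each part induces a vertex-disjoint union of
directed paths (every vertex has in-degree at most 1 in the induced sub-digraph; the
out-degree is at most 1 automatically), and whenever `F` contains a directed path from `v`
to `v'` with `v, v'` in the same part, `v` and `v'` lie on the same directed path of the
induced sub-digraph, i.e. there is a directed path from `v` to `v'` inside the part. -/
theorem statement10 {V : Type*} [Fintype V] (n : ℕ) (hn : n = Fintype.card V)
    (h2 : 2 ≤ n) (parent : V → Option V)
    (hacyc : ∀ v : V, ¬ Relation.TransGen (fun a b => parent a = some b) v v) :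
    ∃ Y : V → Fin (Nat.clog 2 n),
      (∀ (b a a' : V), Y a = Y b → Y a' = Y b →
        parent a = some b → parent a' = some b → a = a') ∧
      ∀ v v' : V, Y v = Y v' →
        Relation.TransGen (fun a b => parent a = some b) v v' →
        Relation.ReflTransGen
          (fun a b => parent a = some b ∧ Y a = Y v ∧ Y b = Y v) v v' := by
  have hr : Relator.RightUnique (fun a b => parent a = some b) :=
    fun _ _ _ hb hc => Option.some.inj (hb.symm.trans hc)
  have hcard (v : V) : (subtree (fun a b => parent a = some b) v).ncard ≤ n := by
    rw [hn, ← Nat.card_eq_fintype_card]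
    exact Set.ncard_le_card _
  exact statement10_general hr hacyc (fun _ => Set.toFinite _)
    fun v => (Nat.succ_le_succ (hcard v)).trans_lt (add_one_lt_two_pow_clog_succ h2)
end

section
/- There is a universal constant c ≥ 1 such that the following holds. Let n be such that √n is an even positive integer, let Ĝ be the wall of length √n/2 and height √n (obtained from the √n×√n grid), and let M be any set of demand pairs in Ĝ with all sources distinct and all destinations distinct. Then OPT_NDP(Ĝ,M) ≤ OPT_EDP(Ĝ,M) ≤ c·OPT_NDP(Ĝ,M). -/
/-!
Vertex-disjoint paths are edge-disjoint, which gives the first inequality.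

For the second, fix pairwise edge-disjoint paths in a graph of maximum degree at most `3`, such as
the wall. A path uses two edges at each of its internal vertices, so a vertex shared by two of the
paths cannot be internal to both: it is an endpoint of one of them. Moreover at most `4` of the
paths visit a given vertex `v`, namely at most `3` that use an edge at `v` and the trivial path
from `v` to itself. Hence, writing `i → j` when an endpoint of the `i`-th path lies on the `j`-th,
all out-degrees are at most `8`. Every subgraph of such a digraph has a vertex of in-degree at
most `8`, hence of total degree at most `16`, and selecting such vertices greedily leaves an
independent set containing at least a `1 / 17` fraction of the paths.
-/

open Finset

/-- The grid `G^{ℓ,h}` (with `h` rows and `ℓ` columns) minus the edge set `E*(G)`: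
the vertical edge `e^j_z` (between rows `z` and `z+1` of column `j`) is kept iff
`z ≡ j (mod 2)`. -/
def gridMinusE (ℓ h : ℕ) : SimpleGraph Vtx :=
  SimpleGraph.fromRel (fun u v =>
    1 ≤ u.1 ∧ u.1 ≤ h ∧ 1 ≤ u.2 ∧ u.2 ≤ ℓ ∧
    1 ≤ v.1 ∧ v.1 ≤ h ∧ 1 ≤ v.2 ∧ v.2 ≤ ℓ ∧
    ((u.1 = v.1 ∧ u.2 + 1 = v.2) ∨ (u.2 = v.2 ∧ u.1 + 1 = v.1 ∧ u.1 % 2 = u.2 % 2)))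

/-- A vertex of the wall: a vertex of degree at least 2 in `gridMinusE` (the degree-1
vertices are deleted when forming the wall). -/
def IsWallVertex (ℓ h : ℕ) (v : Vtx) : Prop :=
  2 ≤ ((gridMinusE ℓ h).neighborSet v).ncard

/-- The wall of length `ℓ/2` and height `h`, obtained from `G^{ℓ,h}` by deleting the edges
of `E*(G)` and then all degree-1 vertices. -/
def wallG (ℓ h : ℕ) : SimpleGraph Vtx :=
  SimpleGraph.fromRel (fun u v =>
    (gridMinusE ℓ h).Adj u v ∧ IsWallVertex ℓ h u ∧ IsWallVertex ℓ h v)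

/-- The demand pairs of `M` can be simultaneously routed via edge-disjoint paths in `G`. -/
def EdgeDisjointRoutable {V : Type*} (G : SimpleGraph V) (M : Finset (V × V)) : Prop :=
  ∃ P : ∀ m : {m // m ∈ M}, G.Walk m.val.1 m.val.2,
    (∀ m, (P m).IsPath) ∧
    ∀ m m' : {m // m ∈ M}, m ≠ m' → ∀ e, e ∈ (P m).edges → e ∉ (P m').edges

/-- Optimal value of the node-disjoint paths problem. -/
noncomputable def OPTn {V : Type*} (G : SimpleGraph V) (M : Finset (V × V)) : ℕ :=
  sSup {k | ∃ M' ⊆ M, M'.card = k ∧ NodeDisjointRoutable G M'}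

/-- Optimal value of the edge-disjoint paths problem. -/
noncomputable def OPTe {V : Type*} (G : SimpleGraph V) (M : Finset (V × V)) : ℕ :=
  sSup {k | ∃ M' ⊆ M, M'.card = k ∧ EdgeDisjointRoutable G M'}

section IndependentSets

variable {α : Type*}

lemma exists_isIndepSet_of_degenerate (G : SimpleGraph α) [DecidableRel G.Adj] (k : ℕ)
    (S : Finset α) (hS : ∀ U ⊆ S, U.Nonempty → ∃ v ∈ U, #{w ∈ U | G.Adj v w} ≤ k) :
    ∃ T ⊆ S, G.IsIndepSet T ∧ #S ≤ (k + 1) * #T := by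
  classical
  induction S using Finset.strongInduction with
  | H S ih =>
    rcases S.eq_empty_or_nonempty with rfl | hne
    · exact ⟨∅, by simp⟩
    obtain ⟨v, hv, hdeg⟩ := hS S Subset.rfl hne
    let far : Finset α := {w ∈ S | w ≠ v ∧ ¬ G.Adj v w}
    have hfar : far ⊂ S := filter_ssubset.2 ⟨v, hv, by simp⟩
    obtain ⟨T, hT, hindep, hcard⟩ := ih far hfar fun U hU => hS U (hU.trans hfar.subset)
    have hTfar : ∀ w ∈ T, w ≠ v ∧ ¬ G.Adj v w := fun w hw => (mem_filter.1 (hT hw)).2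
    have hvT : v ∉ T := fun h => (hTfar v h).1 rfl
    refine ⟨insert v T, insert_subset hv (hT.trans hfar.subset), ?_, ?_⟩
    · rw [SimpleGraph.isIndepSet_iff, coe_insert]
      exact hindep.insert fun w hw _ => ⟨(hTfar w hw).2, fun h => (hTfar w hw).2 h.symm⟩
    · have hcover : S ⊆ far ∪ insert v {w ∈ S | G.Adj v w} := by
        intro w hw
        simp only [far, mem_union, mem_insert, mem_filter]
        tauto
      calc #S ≤ #far + #(insert v {w ∈ S | G.Adj v w}) :=
            (card_le_card hcover).trans (card_union_le _ _)
        _ ≤ (k + 1) * #T + (k + 1) :=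
            Nat.add_le_add hcard ((card_insert_le _ _).trans (Nat.succ_le_succ hdeg))
        _ = (k + 1) * #(insert v T) := by rw [card_insert_of_notMem hvT, mul_add_one]

lemma exists_card_inNeighbors_le (r : α → α → Prop) [DecidableRel r] {d : ℕ} {S : Finset α}
    (hS : S.Nonempty) (hr : ∀ i ∈ S, #{j ∈ S | r i j} ≤ d) :
    ∃ j ∈ S, #{i ∈ S | r i j} ≤ d := by
  refine exists_le_of_sum_le hS ?_
  calc ∑ j ∈ S, #{i ∈ S | r i j} = ∑ i ∈ S, #{j ∈ S | r i j} :=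
        (sum_card_bipartiteAbove_eq_sum_card_bipartiteBelow r).symm
    _ ≤ ∑ _i ∈ S, d := sum_le_sum hr

lemma exists_isIndepSet_fromRel (r : α → α → Prop) [DecidableRel r] (d : ℕ) (S : Finset α)
    (hr : ∀ i ∈ S, #{j ∈ S | r i j} ≤ d) :
    ∃ T ⊆ S, (SimpleGraph.fromRel r).IsIndepSet T ∧ #S ≤ (2 * d + 1) * #T := by
  classical
  refine exists_isIndepSet_of_degenerate _ _ S fun U hU hne => ?_
  have hrU : ∀ i ∈ U, #{j ∈ U | r i j} ≤ d := fun i hi =>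
    (card_le_card (filter_subset_filter _ hU)).trans (hr i (hU hi))
  obtain ⟨v, hv, hin⟩ := exists_card_inNeighbors_le r hne hrU
  refine ⟨v, hv, ?_⟩
  calc #{w ∈ U | (SimpleGraph.fromRel r).Adj v w} ≤ #{w ∈ U | r v w ∨ r w v} :=
        card_le_card (monotone_filter_right U fun _ _ h => h.2)
    _ ≤ #{w ∈ U | r v w} + #{w ∈ U | r w v} := by
        rw [filter_or]
        exact card_union_le _ _
    _ ≤ 2 * d := by
        rw [two_mul]
        exact Nat.add_le_add (hrU v hv) hin

end IndependentSets

section EdgeDisjointWalks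

variable {V ι : Type*} {G : SimpleGraph V}

lemma ncard_neighborSet_toSubgraph_of_mem_support {u v w : V} {p : G.Walk u w} (hp : p.IsPath)
    (hv : v ∈ p.support) (hvu : v ≠ u) (hvw : v ≠ w) :
    (p.toSubgraph.neighborSet v).ncard = 2 := by
  obtain ⟨i, rfl, hi⟩ := SimpleGraph.Walk.mem_support_iff_exists_getVert.1 hv
  have hi_pos : i ≠ 0 := by
    rintro rfl
    exact hvu p.getVert_zero
  have hi_length : i ≠ p.length := by
    rintro rfl
    exact hvw p.getVert_length
  exact hp.ncard_neighborSet_toSubgraph_internal_eq_two hi_pos (hi.lt_of_ne hi_length)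

lemma four_le_degree_of_disjoint_edges {a b a' b' v : V} [Fintype (G.neighborSet v)]
    {p : G.Walk a b} {q : G.Walk a' b'} (hp : p.IsPath) (hq : q.IsPath)
    (hpq : p.edges.Disjoint q.edges) (hvp : v ∈ p.support) (hvq : v ∈ q.support)
    (hva : v ≠ a) (hvb : v ≠ b) (hva' : v ≠ a') (hvb' : v ≠ b') : 4 ≤ G.degree v := by
  have hdisj : Disjoint (p.toSubgraph.neighborSet v) (q.toSubgraph.neighborSet v) :=
    Set.disjoint_left.2 fun x hxp hxq =>
      @hpq s(v, x) (p.mem_edges_toSubgraph.1 hxp) (q.mem_edges_toSubgraph.1 hxq)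
  have hfin (H : G.Subgraph) : (H.neighborSet v).Finite :=
    (G.neighborSet v).toFinite.subset (H.neighborSet_subset v)
  calc 4 = (p.toSubgraph.neighborSet v).ncard + (q.toSubgraph.neighborSet v).ncard := by
        rw [ncard_neighborSet_toSubgraph_of_mem_support hp hvp hva hvb,
          ncard_neighborSet_toSubgraph_of_mem_support hq hvq hva' hvb']
    _ = (p.toSubgraph.neighborSet v ∪ q.toSubgraph.neighborSet v).ncard :=
        (Set.ncard_union_eq hdisj (hfin _) (hfin _)).symm
    _ ≤ (G.neighborSet v).ncard :=
        Set.ncard_le_ncard (Set.union_subset (SimpleGraph.Subgraph.neighborSet_subset _ v)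
          (SimpleGraph.Subgraph.neighborSet_subset _ v)) (Set.toFinite _)
    _ = G.degree v := by
        rw [Set.ncard_eq_toFinset_card', SimpleGraph.degree, SimpleGraph.neighborFinset]

lemma exists_mem_edges_of_mem_support {u v w : V} {p : G.Walk u w} (hp : ¬ p.Nil)
    (hv : v ∈ p.support) : ∃ x, s(v, x) ∈ p.edges := by
  obtain ⟨e, he, x, rfl⟩ := (SimpleGraph.Walk.mem_support_iff_exists_mem_edges_of_not_nil hp).1 hv
  exact ⟨x, he⟩

variable [Fintype ι] {s t : ι → V} {P : ∀ i, G.Walk (s i) (t i)}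

open Classical in
lemma card_visiting_not_nil_le_degree
    (hP : Pairwise fun i j => (P i).edges.Disjoint (P j).edges)
    (v : V) [Fintype (G.neighborSet v)] :
    #{i | v ∈ (P i).support ∧ ¬ (P i).Nil} ≤ G.degree v := by
  refine card_le_card_of_forall_subsingleton (fun i x => s(v, x) ∈ (P i).edges) ?_ ?_
  · intro i hi
    obtain ⟨hv, hnil⟩ := (mem_filter.1 hi).2
    obtain ⟨x, hx⟩ := exists_mem_edges_of_mem_support hnil hv
    exact ⟨x, (G.mem_neighborFinset v x).2 ((P i).adj_of_mem_edges hx), hx⟩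
  · rintro x - i ⟨-, hi⟩ j ⟨-, hj⟩
    by_contra hij
    exact hP hij hi hj

open Classical in
lemma card_visiting_nil_le_one (hst : Function.Injective fun i => (s i, t i)) (v : V) :
    #{i | v ∈ (P i).support ∧ (P i).Nil} ≤ 1 := by
  have endpoints {i : ι} (hv : v ∈ (P i).support) (hnil : (P i).Nil) : (s i, t i) = (v, v) := by
    rw [SimpleGraph.Walk.nil_iff_support_eq.1 hnil, List.mem_singleton] at hv
    rw [← hnil.eq, ← hv]
  refine card_le_one.2 fun i hi j hj => hst ?_
  obtain ⟨hvi, hnili⟩ := (mem_filter.1 hi).2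
  obtain ⟨hvj, hnilj⟩ := (mem_filter.1 hj).2
  exact (endpoints hvi hnili).trans (endpoints hvj hnilj).symm

open Classical in
lemma card_visiting_le_degree_add_one
    (hP : Pairwise fun i j => (P i).edges.Disjoint (P j).edges)
    (hst : Function.Injective fun i => (s i, t i)) (v : V) [Fintype (G.neighborSet v)] :
    #{i | v ∈ (P i).support} ≤ G.degree v + 1 := by
  rw [← card_filter_add_card_filter_not (p := fun i => ¬ (P i).Nil), filter_filter, filter_filter]
  simp only [not_not]
  exact Nat.add_le_add (card_visiting_not_nil_le_degree hP v) (card_visiting_nil_le_one hst v)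

lemma exists_pairwise_disjoint_support [G.LocallyFinite] (hG : ∀ v, G.degree v ≤ 3)
    (hpath : ∀ i, (P i).IsPath) (hP : Pairwise fun i j => (P i).edges.Disjoint (P j).edges)
    (hst : Function.Injective fun i => (s i, t i)) :
    ∃ T : Finset ι, (T : Set ι).Pairwise (fun i j => (P i).support.Disjoint (P j).support) ∧
      Fintype.card ι ≤ 17 * #T := by
  classical
  let meets (i j : ι) : Prop := s i ∈ (P j).support ∨ t i ∈ (P j).support
  have hvisit (v : V) : #{j | v ∈ (P j).support} ≤ 4 :=
    (card_visiting_le_degree_add_one hP hst v).trans (Nat.succ_le_succ (hG v))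
  have hmeets (i : ι) : #{j | meets i j} ≤ 8 := by
    rw [filter_or]
    exact (card_union_le _ _).trans (Nat.add_le_add (hvisit (s i)) (hvisit (t i)))
  obtain ⟨T, -, hindep, hcard⟩ := exists_isIndepSet_fromRel meets 8 univ fun i _ => hmeets i
  refine ⟨T, fun i hi j hj hij v hvi hvj => ?_, hcard⟩
  obtain ⟨hnij, hnji⟩ : ¬ meets i j ∧ ¬ meets j i := by
    simpa [SimpleGraph.fromRel_adj, hij] using hindep hi hj hij
  have hdegree : 4 ≤ G.degree v :=
    four_le_degree_of_disjoint_edges (hpath i) (hpath j) (hP hij) hvi hvj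
      (fun h => hnij (.inl (h ▸ hvj))) (fun h => hnij (.inr (h ▸ hvj)))
      (fun h => hnji (.inl (h ▸ hvi))) (fun h => hnji (.inr (h ▸ hvi)))
  exact absurd (hG v) (by omega)

end EdgeDisjointWalks

section Routing

variable {V : Type*} {G : SimpleGraph V} {M : Finset (V × V)}

lemma nodeDisjointRoutable_empty : NodeDisjointRoutable G ∅ :=
  ⟨fun m => absurd m.2 (notMem_empty _), fun m => absurd m.2 (notMem_empty _),
    fun m => absurd m.2 (notMem_empty _)⟩

lemma NodeDisjointRoutable.edgeDisjointRoutable (h : NodeDisjointRoutable G M) :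
    EdgeDisjointRoutable G M := by
  obtain ⟨P, hpath, hP⟩ := h
  refine ⟨P, hpath, fun m m' hne e he he' => ?_⟩
  induction e with
  | h a b =>
    exact hP m m' hne a ((P m).fst_mem_support_of_mem_edges he)
      ((P m').fst_mem_support_of_mem_edges he')

lemma EdgeDisjointRoutable.exists_nodeDisjointRoutable_subset [G.LocallyFinite]
    (hG : ∀ v, G.degree v ≤ 3) (hM : EdgeDisjointRoutable G M) :
    ∃ T ⊆ M, NodeDisjointRoutable G T ∧ #M ≤ 17 * #T := by
  obtain ⟨P, hpath, hP⟩ := hM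
  obtain ⟨T, hT, hcard⟩ :=
    exists_pairwise_disjoint_support hG hpath (fun m m' => hP m m') Subtype.val_injective
  have hmem : ∀ m ∈ T.map (Function.Embedding.subtype _), ∃ h : m ∈ M, ⟨m, h⟩ ∈ T := by simp
  refine ⟨T.map (Function.Embedding.subtype _), fun m hm => (hmem m hm).1,
    ⟨fun m => P ⟨m, (hmem m m.2).1⟩, fun m => hpath _, fun m m' hne x hx hx' => ?_⟩,
    by simpa using hcard⟩
  have hne' : (⟨m, (hmem m m.2).1⟩ : {m // m ∈ M}) ≠ ⟨m', (hmem m' m'.2).1⟩ :=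
    fun h => hne (Subtype.ext (Subtype.mk.inj h))
  exact hT (hmem m m.2).2 (hmem m' m'.2).2 hne' hx hx'

lemma bddAbove_card_subset (M : Finset (V × V)) (p : Finset (V × V) → Prop) :
    BddAbove {k | ∃ T ⊆ M, #T = k ∧ p T} := by
  refine ⟨#M, ?_⟩
  rintro k ⟨T, hT, rfl, -⟩
  exact card_le_card hT

lemma NodeDisjointRoutable.card_le_OPTn {T : Finset (V × V)} (h : NodeDisjointRoutable G T)
    (hT : T ⊆ M) : #T ≤ OPTn G M :=
  le_csSup (bddAbove_card_subset M _) ⟨T, hT, rfl, h⟩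

lemma EdgeDisjointRoutable.card_le_OPTe {T : Finset (V × V)} (h : EdgeDisjointRoutable G T)
    (hT : T ⊆ M) : #T ≤ OPTe G M :=
  le_csSup (bddAbove_card_subset M _) ⟨T, hT, rfl, h⟩

lemma exists_card_eq_OPTn (G : SimpleGraph V) (M : Finset (V × V)) :
    ∃ T ⊆ M, #T = OPTn G M ∧ NodeDisjointRoutable G T :=
  Nat.sSup_mem (s := {k | ∃ T ⊆ M, #T = k ∧ NodeDisjointRoutable G T})
    ⟨0, ∅, empty_subset M, card_empty, nodeDisjointRoutable_empty⟩
    (bddAbove_card_subset M _)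

lemma exists_card_eq_OPTe (G : SimpleGraph V) (M : Finset (V × V)) :
    ∃ T ⊆ M, #T = OPTe G M ∧ EdgeDisjointRoutable G T :=
  Nat.sSup_mem (s := {k | ∃ T ⊆ M, #T = k ∧ EdgeDisjointRoutable G T})
    ⟨0, ∅, empty_subset M, card_empty, nodeDisjointRoutable_empty.edgeDisjointRoutable⟩
    (bddAbove_card_subset M _)

lemma OPTn_le_OPTe (G : SimpleGraph V) (M : Finset (V × V)) : OPTn G M ≤ OPTe G M := by
  obtain ⟨T, hTM, hcard, hT⟩ := exists_card_eq_OPTn G M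
  exact hcard ▸ hT.edgeDisjointRoutable.card_le_OPTe hTM

lemma OPTe_le_mul_OPTn [G.LocallyFinite] (hG : ∀ v, G.degree v ≤ 3) (M : Finset (V × V)) :
    OPTe G M ≤ 17 * OPTn G M := by
  obtain ⟨S, hSM, hcard, hS⟩ := exists_card_eq_OPTe G M
  obtain ⟨T, hTS, hT, hST⟩ := hS.exists_nodeDisjointRoutable_subset hG
  calc OPTe G M = #S := hcard.symm
    _ ≤ 17 * #T := hST
    _ ≤ 17 * OPTn G M := Nat.mul_le_mul_left 17 (hT.card_le_OPTn (hTS.trans hSM))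

end Routing

section Wall

/-- The possible neighbours of `v` in the wall: left, right, and a single vertical one whose
direction is dictated by the parity of `v`. In row or column `0`, which lies outside the wall,
truncated subtraction makes `v` a member of the set, which is harmless for an upper bound. -/
def wallNeighborCandidates (v : Vtx) : Finset Vtx :=
  {(v.1, v.2 + 1), (v.1, v.2 - 1), if v.1 % 2 = v.2 % 2 then (v.1 + 1, v.2) else (v.1 - 1, v.2)}

lemma wallG_le_gridMinusE (ℓ h : ℕ) : wallG ℓ h ≤ gridMinusE ℓ h := by
  intro v w hvw
  rw [wallG, SimpleGraph.fromRel_adj] at hvw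
  exact hvw.2.elim (fun hadj => hadj.1) fun hadj => hadj.1.symm

lemma mem_wallNeighborCandidates {ℓ h : ℕ} {v w : Vtx} (hvw : (gridMinusE ℓ h).Adj v w) :
    w ∈ wallNeighborCandidates v := by
  rw [gridMinusE, SimpleGraph.fromRel_adj] at hvw
  obtain ⟨i, j⟩ := v
  obtain ⟨i', j'⟩ := w
  simp only [wallNeighborCandidates, mem_insert, mem_singleton]
  split_ifs <;> simp only [Prod.mk.injEq] at * <;> omega

lemma neighborSet_wallG_subset (ℓ h : ℕ) (v : Vtx) :
    (wallG ℓ h).neighborSet v ⊆ wallNeighborCandidates v :=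
  fun _ hvw => mem_wallNeighborCandidates (wallG_le_gridMinusE ℓ h hvw)

noncomputable instance locallyFiniteWallG (ℓ h : ℕ) : (wallG ℓ h).LocallyFinite := fun v =>
  ((wallNeighborCandidates v).finite_toSet.subset (neighborSet_wallG_subset ℓ h v)).fintype

lemma degree_wallG_le_three (ℓ h : ℕ) (v : Vtx) : (wallG ℓ h).degree v ≤ 3 :=
  (card_le_card fun _ hw => neighborSet_wallG_subset ℓ h v
    ((SimpleGraph.mem_neighborFinset _ _ _).1 hw)).trans card_le_three

end Wall

theorem statement12_general {V : Type*} (G : SimpleGraph V) [G.LocallyFinite]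
    (hG : ∀ v, G.degree v ≤ 3) (M : Finset (V × V)) :
    OPTn G M ≤ OPTe G M ∧ OPTe G M ≤ 17 * OPTn G M :=
  ⟨OPTn_le_OPTe G M, OPTe_le_mul_OPTn hG M⟩

/-- Observation: NDP vs EDP in walls.
There is a universal constant `c` such that for every wall `Ĝ` of length `√n/2` and height
`√n` and every set `M` of demand pairs in `Ĝ` with distinct sources and distinct
destinations, `OPT_NDP(Ĝ,M) ≤ OPT_EDP(Ĝ,M) ≤ c·OPT_NDP(Ĝ,M)`. -/
theorem statement12 :
    ∃ c : ℕ, 1 ≤ c ∧ ∀ m : ℕ, 0 < m → Even m →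
      ∀ M : Finset DPair,
        (∀ p ∈ M, IsWallVertex m m p.1 ∧ IsWallVertex m m p.2) →
        DistinctSources M → DistinctDests M →
        OPTn (wallG m m) M ≤ OPTe (wallG m m) M ∧
        OPTe (wallG m m) M ≤ c * OPTn (wallG m m) M :=
  ⟨17, by norm_num, fun m _ _ M _ _ _ =>
    statement12_general (wallG m m) (degree_wallG_le_three m m) M⟩
end
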